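/- arXiv:2404.04613 — 2 statements merged into one kernel-verified Lean document; each statement's English description precedes it below -/
import Mathlib

section
/- Let P be a convex n-gon in ℝ². Then there exists a guard set G ⊆ P with exactly 4n - 2 guards such that no point of P is hidden from two distinct guards of G; that is, every point x ∈ P is hidden from at most one guard of G. -/
/-!
Say that the *tail* of a point `b` seen from a point `a` is the set of `x ∈ P` with `b` in the segment
from `a` to `x`. A family of points is *good* (`Good`) if no two tails with different sources and
different ends meet; a good family hides each point of `P` from at most one of its members
(`Good.hidden_unique`). A good family with `4 n - 2` members is built from the vertices in three
perturbation steps.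

* The family of vertices is good because no tail ending at a vertex contains another point
  (`PolygonFrame.good_v`).
* Take a functional `φ` that is injective on the vertices. Every vertex other than the two extreme
  ones gets a companion, very close to it and with the same value of `φ`. The `n - 2` tails from a
  vertex through its companion lie on distinct parallel lines, so they are disjoint
  (`PolygonFrame.exists_inner`).
* A short chord near each vertex `v i` cuts off a small cap of `P`. The vertex is replaced by the
  endpoint `m` of that chord on the edge to the next vertex, and by a point `q` inside the cap. The
  tail from `m` through `q` stays inside the cap, where no other tail can interfere
  (`PolygonFrame.eventually_split_good`).
* The point `m` is still the strict maximum of a functional over the family and a maximum over `P`,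
  namely for the edge containing it, so its tails remain trivial. It gets a companion in the direction
  of the chord; the new tail runs along the chord, which no other tail meets
  (`PolygonFrame.exists_good`).

This gives `3 n + (n - 2)` points. That each step keeps the family good follows from two facts:
tails with distinct limits for source and end converge, and being disjoint is an open condition by
compactness (`good_perturb`). So only the tails between two points with the same limit need an
argument, which is given once for the doubling steps (`dbl_good`) and once for the splitting step.
-/

open Set

noncomputable section

/-- The Euclidean plane ℝ². -/
abbrev Plane : Type := EuclideanSpace ℝ (Fin 2)

/-- `P` is a convex `n`-gon with vertex set `V`: `V` is a finite set of exactly `n ≥ 3`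
points, `P` is its convex hull, and each point of `V` is an extreme point of `P`. -/
def IsConvexPolygon (n : ℕ) (V : Finset Plane) (P : Set Plane) : Prop :=
  3 ≤ n ∧ V.card = n ∧ P = convexHull ℝ (V : Set Plane) ∧
    ∀ v ∈ V, v ∈ Set.extremePoints ℝ P

/-- Point `p` is hidden from guard `g` (w.r.t. guard set `G`): some other guard `b ∈ G`
lies strictly between `g` and `p`. -/
def Hidden (G : Finset Plane) (g p : Plane) : Prop :=
  ∃ b ∈ G, b ≠ g ∧ b ∈ openSegment ℝ g p

/-- `G` `k`-covers `P`: every point of `P` is visible from at least `k` guards of `G`. -/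
def KCovers (G : Finset Plane) (P : Set Plane) (k : ℕ) : Prop :=
  ∀ p ∈ P, k ≤ {g ∈ (G : Set Plane) | ¬ Hidden G g p}.ncard

/-- `W` is a wedge: a closed planar convex cone with apex `a` spanned by two
linearly independent directions `u`, `v`. -/
def IsWedge (W : Set Plane) : Prop :=
  ∃ a u v : Plane, LinearIndependent ℝ ![u, v] ∧
    W = {x | ∃ s t : ℝ, 0 ≤ s ∧ 0 ≤ t ∧ x = a + s • u + t • v}

/-! ### Tails, good families and their perturbation -/

open Filter Topology

/-- Some point of `K` lies beyond `b` as seen from `a` and beyond `d` as seen from `c`. The tails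
are closed: `x = b` and `x = d` are allowed. -/
def Cross (K : Set Plane) (a b c d : Plane) : Prop :=
  ∃ x ∈ K, b ∈ segment ℝ a x ∧ d ∈ segment ℝ c x

/-- The indexed family `f` is good: no point of `P` lies on two tails with different sources and
different ends. Two tails with the same end are dealt with in `Good.hidden_unique`. -/
def Good {ι : Type*} (P : Set Plane) (f : ι → Plane) : Prop :=
  ∀ a b c d, a ≠ b → c ≠ d → a ≠ c → b ≠ d → ¬ Cross P (f a) (f b) (f c) (f d)

theorem Cross.symm {K : Set Plane} {a b c d : Plane} (h : Cross K a b c d) :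
    Cross K c d a b := by
  obtain ⟨x, hx, h1, h2⟩ := h
  exact ⟨x, hx, h2, h1⟩

theorem mem_segment_iff' {a b x : Plane} :
    b ∈ segment ℝ a x ↔ ∃ s ∈ Icc (0 : ℝ) 1, b = a + s • (x - a) := by
  rw [segment_eq_image']
  simp only [mem_image, eq_comm]

/-- Projection along a compact set preserves closedness. All the limit arguments below rest on
this: a closed incidence that fails at the limit configuration fails nearby. -/
theorem isClosed_exists {T X : Type*} [TopologicalSpace T] [TopologicalSpace X] {K : Set X}
    (hK : IsCompact K) {S : Set (T × X)} (hS : IsClosed S) :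
    IsClosed {τ | ∃ x ∈ K, (τ, x) ∈ S} := by
  have := isCompact_iff_compactSpace.mp hK
  have h : IsClosed {p : T × K | (p.1, (p.2 : X)) ∈ S} := hS.preimage (by fun_prop)
  convert isClosedMap_fst_of_compactSpace _ h using 1
  ext τ
  simp

theorem isClosed_segment :
    IsClosed {p : Plane × Plane × Plane | p.2.1 ∈ segment ℝ p.1 p.2.2} := by
  have h := isClosed_exists (T := Plane × Plane × Plane) (isCompact_Icc (a := (0 : ℝ)) (b := 1))
    (S := {q | q.1.2.1 = q.1.1 + q.2 • (q.1.2.2 - q.1.1)})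
    (isClosed_eq (by fun_prop) (by fun_prop))
  simpa only [mem_segment_iff', mem_ofPred_eq] using h

theorem ev_none {T : Type*} [TopologicalSpace T] {K : Set Plane} (hK : IsCompact K)
    {S : Set (T × Plane)} (hS : IsClosed S) {τ₀ : T} (h : ¬ ∃ x ∈ K, (τ₀, x) ∈ S) :
    ∀ᶠ τ in 𝓝 τ₀, ¬ ∃ x ∈ K, (τ, x) ∈ S :=
  (isClosed_exists hK hS).isOpen_compl.mem_nhds h

theorem isClosed_cross {K : Set Plane} (hK : IsCompact K) :
    IsClosed {p : Plane × Plane × Plane × Plane | Cross K p.1 p.2.1 p.2.2.1 p.2.2.2} := by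
  refine isClosed_exists hK (S := {q : (Plane × Plane × Plane × Plane) × Plane |
    q.1.2.1 ∈ segment ℝ q.1.1 q.2 ∧ q.1.2.2.2 ∈ segment ℝ q.1.2.2.1 q.2}) ?_
  refine IsClosed.and ?_ ?_
  · exact isClosed_segment.preimage (f := fun q : (Plane × Plane × Plane × Plane) × Plane =>
      (q.1.1, q.1.2.1, q.2)) (by fun_prop)
  · exact isClosed_segment.preimage (f := fun q : (Plane × Plane × Plane × Plane) × Plane =>
      (q.1.2.2.1, q.1.2.2.2, q.2)) (by fun_prop)

theorem ev_not_cross {K : Set Plane} (hK : IsCompact K) {l : Filter ℝ} {a b c d : ℝ → Plane}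
    {a₀ b₀ c₀ d₀ : Plane} (ha : Tendsto a l (𝓝 a₀)) (hb : Tendsto b l (𝓝 b₀))
    (hc : Tendsto c l (𝓝 c₀)) (hd : Tendsto d l (𝓝 d₀)) (h : ¬ Cross K a₀ b₀ c₀ d₀) :
    ∀ᶠ t in l, ¬ Cross K (a t) (b t) (c t) (d t) :=
  (ha.prodMk_nhds (hb.prodMk_nhds (hc.prodMk_nhds hd))).eventually
    ((isClosed_cross hK).isOpen_compl.mem_nhds h)

theorem ev_notMem_segment {l : Filter ℝ} {a b c : ℝ → Plane} {a₀ b₀ c₀ : Plane}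
    (ha : Tendsto a l (𝓝 a₀)) (hb : Tendsto b l (𝓝 b₀)) (hc : Tendsto c l (𝓝 c₀))
    (h : b₀ ∉ segment ℝ a₀ c₀) : ∀ᶠ t in l, b t ∉ segment ℝ (a t) (c t) :=
  (ha.prodMk_nhds (hb.prodMk_nhds hc)).eventually (isClosed_segment.isOpen_compl.mem_nhds h)

/-- If `v` is the only maximiser of `ψ` on `P` and `d₀` does not separate `c₀` from `v`, then for small
`t` the point `d t` separates `c t` from no point of the cap `{x ∈ P | ψ v - t ≤ ψ x}`, since the
caps shrink to `v`. -/
theorem ev_cap {P : Set Plane} (hP : IsCompact P) (ψ : Plane →L[ℝ] ℝ) {v : Plane}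
    (hv : ∀ x ∈ P, ψ v ≤ ψ x → x = v) {l : Filter ℝ} (hl : Tendsto id l (𝓝 0))
    {c d : ℝ → Plane} {c₀ d₀ : Plane}
    (hc : Tendsto c l (𝓝 c₀)) (hd : Tendsto d l (𝓝 d₀)) (h : d₀ ∉ segment ℝ c₀ v) :
    ∀ᶠ t in l, ∀ x ∈ P, ψ v - t ≤ ψ x → d t ∉ segment ℝ (c t) x := by
  have hS : IsClosed {q : (ℝ × Plane × Plane) × Plane |
      ψ v - q.1.1 ≤ ψ q.2 ∧ q.1.2.2 ∈ segment ℝ q.1.2.1 q.2} := by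
    refine IsClosed.and (isClosed_le (by fun_prop) (by fun_prop)) ?_
    exact isClosed_segment.preimage (f := fun q : (ℝ × Plane × Plane) × Plane =>
      (q.1.2.1, q.1.2.2, q.2)) (by fun_prop)
  have := (hl.prodMk_nhds (hc.prodMk_nhds hd)).eventually (ev_none hP hS (τ₀ := (0, c₀, d₀)) ?_)
  · filter_upwards [this] with t ht x hx h1 h2
    exact ht ⟨x, hx, h1, h2⟩
  · rintro ⟨x, hx, h1, h2⟩
    have := hv x hx (by simpa using h1)
    subst this
    exact h h2

theorem ev_cap_disjoint {P : Set Plane} (hP : IsCompact P) (ψ φ : Plane →L[ℝ] ℝ) {v w : Plane}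
    (hv : ∀ x ∈ P, ψ v ≤ ψ x → x = v) (hw : ∀ x ∈ P, φ w ≤ φ x → x = w) (hvw : v ≠ w)
    {l : Filter ℝ} (hl : Tendsto id l (𝓝 0)) :
    ∀ᶠ t in l, ∀ x ∈ P, ψ v - t ≤ ψ x → ¬ φ w - t ≤ φ x := by
  have hS : IsClosed {q : ℝ × Plane | ψ v - q.1 ≤ ψ q.2 ∧ φ w - q.1 ≤ φ q.2} :=
    IsClosed.and (isClosed_le (by fun_prop) (by fun_prop))
      (isClosed_le (by fun_prop) (by fun_prop))
  have := hl.eventually (ev_none hP hS (τ₀ := 0) ?_)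
  · filter_upwards [this] with t ht x hx h1 h2
    exact ht ⟨x, hx, h1, h2⟩
  · rintro ⟨x, hx, h1, h2⟩
    exact hvw ((hv x hx (by simpa using h1)).symm.trans (hw x hx (by simpa using h2)))

/-- A tail whose end `b` maximises a functional strictly, compared with its source, is the single
point `b`. -/
theorem tail_eq {ψ : Plane →L[ℝ] ℝ} {a b x : Plane} (hx : ψ x ≤ ψ b) (ha : ψ a < ψ b)
    (h : b ∈ segment ℝ a x) : x = b := by
  obtain ⟨s, ⟨h0, h1⟩, rfl⟩ := mem_segment_iff'.mp h
  simp only [map_add, map_smul, map_sub, smul_eq_mul] at hx ha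
  have hs : s = 1 := by
    by_contra hne
    have : s < 1 := lt_of_le_of_ne h1 hne
    have h2 : 0 < s * (ψ x - ψ a) := by linarith
    have h3 : 0 < ψ x - ψ a := by
      by_contra h4
      nlinarith
    nlinarith
  subst hs
  simp

theorem segment_trichotomy {p b d x : Plane} (hb : b ∈ segment ℝ p x) (hd : d ∈ segment ℝ p x) :
    b ∈ segment ℝ p d ∨ d ∈ segment ℝ p b := by
  have key : ∀ s r : ℝ, 0 ≤ s → s ≤ r →
      p + s • (x - p) ∈ segment ℝ p (p + r • (x - p)) := by
    intro s r hs hr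
    refine mem_segment_iff'.mpr ⟨s / r, ⟨div_nonneg hs (hs.trans hr), div_le_one_of_le₀ hr (hs.trans hr)⟩, ?_⟩
    rcases eq_or_ne r 0 with rfl | hr0
    · have : s = 0 := le_antisymm hr hs
      simp [this]
    · rw [add_sub_cancel_left, smul_smul, div_mul_cancel₀ _ hr0]
  obtain ⟨s, hs, rfl⟩ := mem_segment_iff'.mp hb
  obtain ⟨r, hr, rfl⟩ := mem_segment_iff'.mp hd
  rcases le_total s r with h | h
  · exact Or.inl (key s r hs.1 h)
  · exact Or.inr (key r s hr.1 h)

theorem Good.notMem_segment {ι : Type*} {P : Set Plane} {f : ι → Plane} (hf : Good P f)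
    (hP : ∀ i, f i ∈ P) {b c d : ι} (hcd : c ≠ d) (hdb : d ≠ b) :
    f d ∉ segment ℝ (f c) (f b) := fun h =>
  hf c d d b hcd hdb hcd hdb ⟨f b, hP b, h, right_mem_segment ℝ _ _⟩

theorem Good.not_cross_source {ι : Type*} {P : Set Plane} {f : ι → Plane} (hf : Good P f)
    (hP : ∀ i, f i ∈ P) {p b d : ι} (hpb : p ≠ b) (hpd : p ≠ d) (hbd : b ≠ d) :
    ¬ Cross P (f p) (f b) (f p) (f d) := by
  rintro ⟨x, -, h1, h2⟩
  rcases segment_trichotomy h1 h2 with h | h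
  · exact hf.notMem_segment hP hpb hbd h
  · exact hf.notMem_segment hP hpd hbd.symm h

theorem Good.injective {ι : Type*} {P : Set Plane} {f : ι → Plane} (hf : Good P f)
    (hP : ∀ i, f i ∈ P) : Function.Injective f := by
  intro a b hab
  by_contra hne
  exact hf a b b a hne (Ne.symm hne) hne (Ne.symm hne)
    ⟨f a, hP a, by simp [hab], by simp [hab]⟩

/-- A family `F t` that converges to a good family, several members possibly having the same limit,
is good for `t` close to the limit, provided:
* `M` marks members of `F t` at which every tail is trivial (`hT`) and which lie on no tail with
  another end (`hT'`);
* over each limit point there is at most one unmarked member (`hU`);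
* a tail whose source and end have the same limit meets no tail with another end, both ends being
  unmarked (`hX`).

The remaining pairs of tails have limits that do not meet. -/
theorem good_perturb {ι α : Type*} [Finite α] {P : Set Plane} (hP : IsCompact P)
    {f : ι → Plane} (hfP : ∀ i, f i ∈ P) (hf : Good P f) (π : α → ι) {l : Filter ℝ}
    {F : ℝ → α → Plane} (hF : ∀ a, Tendsto (fun t => F t a) l (𝓝 (f (π a)))) (M : α → Prop)
    (hU : ∀ b d, ¬ M b → ¬ M d → π b = π d → b = d)
    (hT : ∀ᶠ t in l, ∀ b, M b → ∀ a, a ≠ b → ∀ x ∈ P, F t b ∈ segment ℝ (F t a) x → x = F t b)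
    (hT' : ∀ᶠ t in l, ∀ b, M b → ∀ c d, c ≠ d → d ≠ b → F t d ∉ segment ℝ (F t c) (F t b))
    (hX : ∀ᶠ t in l, ∀ a b c d, π a = π b → ¬ M b → ¬ M d → a ≠ b → c ≠ d → a ≠ c → b ≠ d →
      ¬ Cross P (F t a) (F t b) (F t c) (F t d)) :
    ∀ᶠ t in l, Good P (F t) := by
  have hlim : ∀ᶠ t in l, ∀ a b c d, π a ≠ π b → π c ≠ π d → π b ≠ π d →
      ¬ Cross P (F t a) (F t b) (F t c) (F t d) := by
    simp only [eventually_all]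
    intro a b c d h1 h2 h3
    apply ev_not_cross hP (hF a) (hF b) (hF c) (hF d)
    by_cases h4 : π a = π c
    · rw [← h4]
      exact hf.not_cross_source hfP h1 (h4 ▸ h2) h3
    · exact hf _ _ _ _ h1 h2 h4 h3
  filter_upwards [hT, hT', hX, hlim] with t h1 h2 h3 h4 a b c d hab hcd hac hbd hcr
  have trivial_end : ∀ a b c d, a ≠ b → c ≠ d → b ≠ d →
      Cross P (F t a) (F t b) (F t c) (F t d) → ¬ M b := by
    rintro a b c d hab hcd hbd ⟨x, hx, hb, hd⟩ hM
    obtain rfl := h1 b hM a hab x hx hb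
    exact h2 b hM c d hcd hbd.symm hd
  have hb := trivial_end a b c d hab hcd hbd hcr
  have hd := trivial_end c d a b hcd hab hbd.symm hcr.symm
  by_cases e1 : π a = π b
  · exact h3 a b c d e1 hb hd hab hcd hac hbd hcr
  by_cases e2 : π c = π d
  · exact h3 c d a b e2 hd hb hcd hab hac.symm hbd.symm hcr.symm
  exact h4 a b c d e1 e2 (fun h => hbd (hU b d hb hd h)) hcr

/-! ### Doubling points along rays -/

/-- The closed ray from `p` through `q`. -/
def Ray (p q : Plane) : Set Plane := {x | ∃ t : ℝ, 0 ≤ t ∧ x = p + t • (q - p)}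

theorem mem_ray_of_mem_segment {p q x : Plane} {ε : ℝ} (hε : 0 < ε) (hpq : p ≠ q)
    (h : p + ε • (q - p) ∈ segment ℝ p x) : x ∈ Ray p q := by
  obtain ⟨s, ⟨h0, h1⟩, hs⟩ := mem_segment_iff'.mp h
  have hs' : ε • (q - p) = s • (x - p) := add_left_cancel hs
  have hs0 : s ≠ 0 := by
    rintro rfl
    rw [zero_smul] at hs'
    rcases smul_eq_zero.mp hs' with h | h
    · exact hε.ne' h
    · exact hpq (sub_eq_zero.mp h).symm
  refine ⟨s⁻¹ * ε, by positivity, ?_⟩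
  rw [mul_smul, hs', smul_smul, inv_mul_cancel₀ hs0, one_smul, add_sub_cancel]

theorem ray_segment {p q y z x : Plane} (hy : y ∈ Ray p q) (hx : x ∈ Ray p q)
    (h : z ∈ segment ℝ y x) : z ∈ Ray p q := by
  obtain ⟨s, ⟨h0, h1⟩, rfl⟩ := mem_segment_iff'.mp h
  obtain ⟨t, ht, rfl⟩ := hy
  obtain ⟨r, hr, rfl⟩ := hx
  refine ⟨t + s * (r - t), by nlinarith, ?_⟩
  module

theorem isClosed_ray {p q : Plane} (ψ : Plane →L[ℝ] ℝ) (h : ψ q < ψ p) : IsClosed (Ray p q) := by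
  have : Ray p q = {x | 0 ≤ (ψ p - ψ x) / (ψ p - ψ q)} ∩
      {x | x = p + ((ψ p - ψ x) / (ψ p - ψ q)) • (q - p)} := by
    have hne : ψ p - ψ q ≠ 0 := by linarith
    ext x
    constructor
    · rintro ⟨t, ht, rfl⟩
      have : (ψ p - ψ (p + t • (q - p))) / (ψ p - ψ q) = t := by
        simp only [map_add, map_smul, map_sub, smul_eq_mul]
        field_simp
        ring
      refine ⟨?_, by simp only [mem_ofPred_eq, this]⟩
      rw [mem_ofPred_eq, this]
      exact ht
    · rintro ⟨h1, h2⟩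
      exact ⟨_, h1, h2⟩
  rw [this]
  exact (isClosed_le (by fun_prop) (by fun_prop)).inter (isClosed_eq (by fun_prop) (by fun_prop))

/-- The family `f` with, for each `k`, an extra point close to `f (e k)` in the direction of `w k`. -/
def dbl {ι κ : Type*} (f : ι → Plane) (e : κ → ι) (w : κ → Plane) (ε : ℝ) : ι ⊕ κ → Plane :=
  Sum.elim f fun k => f (e k) + ε • (w k - f (e k))

theorem dbl_mem_ray {ι κ : Type*} (f : ι → Plane) (e : κ → ι) (w : κ → Plane) {ε : ℝ}
    (hε : 0 < ε) (k : κ) : dbl f e w ε (Sum.inr k) ∈ Ray (f (e k)) (w k) :=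
  ⟨ε, hε.le, rfl⟩

theorem dbl_mem {ι κ : Type*} {P : Set Plane} (hPc : Convex ℝ P) {f : ι → Plane}
    (hfP : ∀ i, f i ∈ P) (e : κ → ι) {w : κ → Plane} (hw : ∀ k, w k ∈ P) {ε : ℝ}
    (hε : 0 < ε) (hε1 : ε < 1) (a : ι ⊕ κ) : dbl f e w ε a ∈ P := by
  rcases a with i | k
  · exact hfP i
  · exact hPc.add_smul_sub_mem (hfP _) (hw k) ⟨hε.le, hε1.le⟩

theorem dbl_tendsto {ι κ : Type*} (f : ι → Plane) (e : κ → ι) (w : κ → Plane) (a : ι ⊕ κ) :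
    Tendsto (fun ε => dbl f e w ε a) (𝓝[>] 0) (𝓝 (f (Sum.elim id e a))) := by
  rcases a with i | k
  · exact tendsto_const_nhds
  · have : Continuous fun ε : ℝ => f (e k) + ε • (w k - f (e k)) := by fun_prop
    have h := this.tendsto 0
    simp only [zero_smul, add_zero] at h
    exact h.mono_left nhdsWithin_le_nhds

/-- Doubling: for small `ε` the family `dbl f e w ε` is good. Each doubled point `f (e k)` is the
strict maximum of `ψ k` over the family and a maximum over `P`, so all its tails are trivial (`H1`,
`H1'`). The only new tails without an old tail as limit run from `f (e k)` through its double, hence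
along the ray towards `w k`; inside `P` these rays avoid each other (`H2`), the other points of the
family (`H3`) and the old tails (`H4`). -/
theorem dbl_good {ι κ : Type*} [Finite ι] [Finite κ] {P : Set Plane} (hP : IsCompact P)
    (hPc : Convex ℝ P) {f : ι → Plane} (hfP : ∀ i, f i ∈ P) (hf : Good P f) {e : κ → ι}
    (he : Function.Injective e) {w : κ → Plane} (hw : ∀ k, w k ∈ P) (ψ : κ → Plane →L[ℝ] ℝ)
    (H1 : ∀ k, ∀ x ∈ P, ψ k x ≤ ψ k (f (e k)))
    (H1' : ∀ k i, i ≠ e k → ψ k (f i) < ψ k (f (e k)))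
    (H1w : ∀ k, ψ k (w k) < ψ k (f (e k)))
    (H2 : ∀ k l, k ≠ l → ∀ x ∈ P, x ∈ Ray (f (e k)) (w k) → x ∉ Ray (f (e l)) (w l))
    (H3 : ∀ k i, i ≠ e k → f i ∉ Ray (f (e k)) (w k))
    (H4 : ∀ k c d, c ≠ d → c ≠ e k → d ≠ e k → ∀ x ∈ P, x ∈ Ray (f (e k)) (w k) →
      f d ∉ segment ℝ (f c) x) :
    ∀ᶠ ε in 𝓝[>] (0 : ℝ), Good P (dbl f e w ε) := by
  have hlim := dbl_tendsto f e w
  have hne : ∀ k, f (e k) ≠ w k := fun k h => by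
    have := H1w k
    rw [← h] at this
    exact lt_irrefl _ this
  have h0 : ∀ᶠ ε in 𝓝[>] (0 : ℝ), 0 < ε := self_mem_nhdsWithin
  have h1 : ∀ᶠ ε in 𝓝[>] (0 : ℝ), ε < 1 := nhdsWithin_le_nhds (gt_mem_nhds one_pos)
  -- `f (e k)` strictly maximises `ψ k` over the whole family
  have hψ : ∀ᶠ ε in 𝓝[>] (0 : ℝ), ∀ k, ∀ a, a ≠ Sum.inl (e k) →
      ψ k (dbl f e w ε a) < ψ k (f (e k)) := by
    simp only [eventually_all]
    rintro k (i | l) ha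
    · exact Eventually.of_forall fun _ => H1' k i (fun h => ha (h ▸ rfl))
    · by_cases hkl : l = k
      · subst hkl
        filter_upwards [h0] with ε hε
        have := H1w l
        simp only [dbl, Sum.elim_inr, map_add, map_smul, map_sub, smul_eq_mul]
        nlinarith
      · have := ((ψ k).continuous.tendsto _).comp (hlim (Sum.inr l))
        exact this.eventually (gt_mem_nhds (H1' k _ fun h => hkl (he h)))
  -- no member over another index lies on the `k`-th ray
  have hray : ∀ᶠ ε in 𝓝[>] (0 : ℝ), ∀ k, ∀ a, Sum.elim id e a ≠ e k →
      dbl f e w ε a ∉ Ray (f (e k)) (w k) := by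
    filter_upwards [h0, h1] with ε hε hε1 k a ha hR
    rcases a with i | l
    · exact H3 k i ha hR
    · exact H2 k l (fun h => ha (h ▸ rfl)) _ (dbl_mem hPc hfP e hw hε hε1 _) hR
        (dbl_mem_ray f e w hε l)
  have hT : ∀ᶠ ε in 𝓝[>] (0 : ℝ), ∀ k, ∀ a, a ≠ Sum.inl (e k) → ∀ x ∈ P,
      f (e k) ∈ segment ℝ (dbl f e w ε a) x → x = f (e k) := by
    filter_upwards [hψ] with ε h k a ha x hx hs
    exact tail_eq (H1 k x hx) (h k a ha) hs
  have hseg : ∀ᶠ ε in 𝓝[>] (0 : ℝ), ∀ k, ∀ c d, Sum.elim id e c ≠ Sum.elim id e d →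
      Sum.elim id e d ≠ e k → dbl f e w ε d ∉ segment ℝ (dbl f e w ε c) (f (e k)) := by
    simp only [eventually_all]
    intro k c d hcd hd
    exact ev_notMem_segment (hlim c) (hlim d) tendsto_const_nhds (hf.notMem_segment hfP hcd hd)
  -- `H4` survives the perturbation because `P ∩ Ray (f (e k)) (w k)` is compact
  have hK : ∀ᶠ ε in 𝓝[>] (0 : ℝ), ∀ k, ∀ c d, Sum.elim id e c ≠ Sum.elim id e d →
      Sum.elim id e c ≠ e k → Sum.elim id e d ≠ e k →
      ∀ x ∈ P, x ∈ Ray (f (e k)) (w k) → dbl f e w ε d ∉ segment ℝ (dbl f e w ε c) x := by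
    simp only [eventually_all (ι := κ), eventually_all (ι := ι ⊕ κ)]
    intro k c d
    simp only [eventually_imp_distrib_left]
    intro hcd hc hd
    have : ¬ Cross (P ∩ Ray (f (e k)) (w k)) (f (Sum.elim id e c)) (f (Sum.elim id e d))
        (f (Sum.elim id e c)) (f (Sum.elim id e d)) := by
      rintro ⟨x, ⟨hx, hR⟩, h, -⟩
      exact H4 k _ _ hcd hc hd x hx hR h
    filter_upwards [ev_not_cross (hP.inter_right (isClosed_ray (ψ k) (H1w k))) (hlim c) (hlim d)
      (hlim c) (hlim d) this] with ε h x hx hR hs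
    exact h ⟨x, ⟨hx, hR⟩, hs, hs⟩
  -- two members of the family over the same index
  have hpair : ∀ a b : ι ⊕ κ, a ≠ b → Sum.elim id e a = Sum.elim id e b →
      (∃ k, a = Sum.inl (e k) ∧ b = Sum.inr k) ∨ (∃ k, a = Sum.inr k ∧ b = Sum.inl (e k)) := by
    rintro (i | k) (j | l) hab h
    · exact absurd (congrArg Sum.inl h) hab
    · exact Or.inl ⟨l, congrArg Sum.inl h, rfl⟩
    · exact Or.inr ⟨k, rfl, congrArg Sum.inl h.symm⟩
    · exact absurd (congrArg Sum.inr (he h)) hab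
  -- the marked members are the doubled points `f (e k)`
  refine good_perturb hP hfP hf (Sum.elim id e) hlim (fun b => ∃ k, b = Sum.inl (e k)) ?_ ?_ ?_ ?_
  · intro b d hb hd h
    by_contra hbd
    rcases hpair b d hbd h with ⟨k, rfl, -⟩ | ⟨k, -, rfl⟩
    · exact hb ⟨k, rfl⟩
    · exact hd ⟨k, rfl⟩
  · filter_upwards [hT] with ε h
    rintro _ ⟨k, rfl⟩ a ha x hx hs
    exact h k a ha x hx hs
  · filter_upwards [h0, hψ, hT, hseg, hray] with ε hε hψ hT hseg hray
    rintro _ ⟨k, rfl⟩ c d hcd hdk hs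
    change dbl f e w ε d ∈ segment ℝ (dbl f e w ε c) (f (e k)) at hs
    by_cases hck : c = Sum.inl (e k)
    · subst hck
      have h1 := hψ k d hdk
      have h2 : dbl f e w ε d = f (e k) := by simpa [dbl] using hs
      rw [h2] at h1
      exact lt_irrefl _ h1
    by_cases hd : Sum.elim id e d = e k
    · rcases hpair d (Sum.inl (e k)) hdk hd with ⟨l, -, h⟩ | ⟨l, rfl, h⟩
      · cases h
      have hkl : k = l := he (Sum.inl_injective h)
      subst hkl
      refine hray k c (fun h => ?_) (mem_ray_of_mem_segment hε (hne k) (by rwa [segment_symm] at hs))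
      rcases hpair c _ hck h with ⟨l, -, h⟩ | ⟨l, rfl, h'⟩
      · cases h
      · exact hcd (congrArg Sum.inr (he h))
    by_cases hcd' : Sum.elim id e c = Sum.elim id e d
    · rcases hpair c d hcd hcd' with ⟨l, rfl, rfl⟩ | ⟨l, rfl, rfl⟩
      · exact H3 l (e k) (Ne.symm hd) (mem_ray_of_mem_segment hε (hne l) hs)
      · have := hT l _ hcd _ (hfP (e k)) hs
        have h1 := H1' l (e k) (Ne.symm hd)
        rw [this] at h1
        exact lt_irrefl _ h1
    · exact hseg k c d hcd' hd hs
  · filter_upwards [h0, hray, hK] with ε hε hray hK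
    rintro a b c d hab hb hd hne' hcd hac hbd ⟨x, hx, h1, h2⟩
    rcases hpair a b hne' hab with ⟨k, rfl, rfl⟩ | ⟨k, -, rfl⟩
    swap
    · exact hb ⟨k, rfl⟩
    have hR := mem_ray_of_mem_segment hε (hne k) h1
    have hdk : Sum.elim id e d ≠ e k := by
      intro h
      rcases hpair d (Sum.inl (e k)) (fun h => hd ⟨k, h⟩) h with ⟨l, -, h⟩ | ⟨l, rfl, h'⟩
      · cases h
      · exact hbd (congrArg Sum.inr (he h.symm))
    by_cases hcd' : Sum.elim id e c = Sum.elim id e d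
    · rcases hpair c d hcd hcd' with ⟨l, rfl, rfl⟩ | ⟨l, rfl, rfl⟩
      · refine H2 k l (fun h => hdk (h ▸ rfl)) x hx hR (mem_ray_of_mem_segment hε (hne l) h2)
      · exact hd ⟨l, rfl⟩
    by_cases hck : Sum.elim id e c = e k
    · rcases hpair c (Sum.inl (e k)) hac.symm hck with ⟨l, -, h⟩ | ⟨l, rfl, h'⟩
      · cases h
      have hkl : l = k := he hck
      subst hkl
      exact hray l d hdk (ray_segment (dbl_mem_ray f e w hε l) hR h2)
    · exact hK k c d hcd' hck hdk x hx hR h2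

/-! ### Splitting the vertices of a polygon -/

theorem seg_le {ψ : Plane →L[ℝ] ℝ} {a b x : Plane} {r : ℝ} (ha : ψ a ≤ r) (hx : ψ x ≤ r)
    (h : b ∈ segment ℝ a x) : ψ b ≤ r := by
  obtain ⟨s, ⟨h0, h1⟩, rfl⟩ := mem_segment_iff'.mp h
  simp only [map_add, map_smul, map_sub, smul_eq_mul]
  nlinarith

/-- The data of a convex polygon `P` used in the construction: the vertices `v i`, an interior
point `o`, the cyclic successor `nx i` of the index `i`, a functional `ψ i` maximised on `P` only at
`v i`, and a functional `ξ i` that is minimal on `P` along the edge from `v i` to `v (nx i)` and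
larger at every other vertex and at `o`. -/
structure PolygonFrame (ι : Type*) (P : Set Plane) where
  v : ι → Plane
  o : Plane
  nx : ι → ι
  ψ : ι → Plane →L[ℝ] ℝ
  ξ : ι → Plane →L[ℝ] ℝ
  compact : IsCompact P
  convex : Convex ℝ P
  hv : ∀ i, v i ∈ P
  ho : o ∈ P
  v_inj : Function.Injective v
  hψ : ∀ i, ∀ x ∈ P, ψ i (v i) ≤ ψ i x → x = v i
  nx_ne : ∀ i, nx i ≠ i
  nx_nx_ne : ∀ i, nx (nx i) ≠ i
  hξ : ∀ i, ∀ x ∈ P, ξ i (v i) ≤ ξ i x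
  ξ_nx : ∀ i, ξ i (v (nx i)) = ξ i (v i)
  ξ_lt : ∀ i k, k ≠ i → k ≠ nx i → ξ i (v i) < ξ i (v k)
  ξ_o : ∀ i, ξ i (v i) < ξ i o

namespace PolygonFrame

variable {ι κ : Type*} {P : Set Plane} (D : PolygonFrame ι P)

/-- The drop of `ψ i` along the edge from `v i` to `v (nx i)`. -/
def α (i : ι) : ℝ := D.ψ i (D.v i) - D.ψ i (D.v (D.nx i))

/-- The drop of `ψ i` from `v i` to `o`. -/
def β (i : ι) : ℝ := D.ψ i (D.v i) - D.ψ i D.o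

theorem ψ_lt {i : ι} {x : Plane} (hx : x ∈ P) (h : x ≠ D.v i) : D.ψ i x < D.ψ i (D.v i) :=
  lt_of_not_ge fun h' => h (D.hψ i x hx h')

theorem α_pos (i : ι) : 0 < D.α i :=
  sub_pos.mpr (D.ψ_lt (D.hv _) fun h => D.nx_ne i (D.v_inj h))

theorem β_pos (i : ι) : 0 < D.β i :=
  sub_pos.mpr (D.ψ_lt D.ho fun h => (D.ξ_o i).ne (by rw [h]))

/-- The point of the edge from `v i` to `v (nx i)` at which `ψ i` has dropped by `t`. -/
def mid (t : ℝ) (i : ι) : Plane := D.v i + (t / D.α i) • (D.v (D.nx i) - D.v i)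

/-- The point of the segment from `v i` to `o` at which `ψ i` has dropped by `t`. -/
def inn (t : ℝ) (i : ι) : Plane := D.v i + (t / D.β i) • (D.o - D.v i)

theorem ψ_mid (t : ℝ) (i : ι) : D.ψ i (D.mid t i) = D.ψ i (D.v i) - t := by
  have h := (D.α_pos i).ne'
  have : t / D.α i * (D.ψ i (D.v (D.nx i)) - D.ψ i (D.v i)) = -t := by
    rw [← neg_sub (D.ψ i (D.v i))]
    change t / D.α i * (- D.α i) = -t
    field_simp
  simp only [mid, map_add, map_smul, map_sub, smul_eq_mul, this]
  ring

theorem ψ_inn (t : ℝ) (i : ι) : D.ψ i (D.inn t i) = D.ψ i (D.v i) - t := by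
  have h := (D.β_pos i).ne'
  have : t / D.β i * (D.ψ i D.o - D.ψ i (D.v i)) = -t := by
    rw [← neg_sub (D.ψ i (D.v i))]
    change t / D.β i * (- D.β i) = -t
    field_simp
  simp only [inn, map_add, map_smul, map_sub, smul_eq_mul, this]
  ring

theorem ξ_mid (t : ℝ) (i : ι) : D.ξ i (D.mid t i) = D.ξ i (D.v i) := by
  simp [mid, D.ξ_nx]

theorem ξ_mid_lt {t : ℝ} {i k : ι} (ht : 0 < t) (htk : t < D.α k) (hik : k ≠ i) :
    D.ξ i (D.v i) < D.ξ i (D.mid t k) := by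
  have h0 : 0 < t / D.α k := div_pos ht (D.α_pos k)
  have h1 : t / D.α k < 1 := (div_lt_one (D.α_pos k)).mpr htk
  have hA := D.hξ i _ (D.hv k)
  have hB := D.hξ i _ (D.hv (D.nx k))
  simp only [mid, map_add, map_smul, map_sub, smul_eq_mul]
  by_cases h : k = D.nx i
  · have := D.ξ_lt i (D.nx k) (h ▸ D.nx_nx_ne i) (h ▸ D.nx_ne k)
    nlinarith
  · have := D.ξ_lt i k hik h
    nlinarith

theorem ξ_inn_lt {t : ℝ} (i : ι) {k : ι} (ht : 0 < t) (htk : t ≤ D.β k) :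
    D.ξ i (D.v i) < D.ξ i (D.inn t k) := by
  have h0 : 0 < t / D.β k := div_pos ht (D.β_pos k)
  have h1 : t / D.β k ≤ 1 := (div_le_one (D.β_pos k)).mpr htk
  have hA := D.hξ i _ (D.hv k)
  have hB := D.ξ_o i
  simp only [inn, map_add, map_smul, map_sub, smul_eq_mul]
  nlinarith

theorem mid_mem {t : ℝ} {i : ι} (ht : 0 ≤ t) (hti : t ≤ D.α i) : D.mid t i ∈ P :=
  D.convex.add_smul_sub_mem (D.hv _) (D.hv _)
    ⟨div_nonneg ht (D.α_pos i).le, (div_le_one (D.α_pos i)).mpr hti⟩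

theorem inn_mem {t : ℝ} {i : ι} (ht : 0 ≤ t) (hti : t ≤ D.β i) : D.inn t i ∈ P :=
  D.convex.add_smul_sub_mem (D.hv _) D.ho
    ⟨div_nonneg ht (D.β_pos i).le, (div_le_one (D.β_pos i)).mpr hti⟩

/-- Each vertex `v i` is replaced by the two points `mid t i` and `inn (t / 2) i`, and the points
`δ` are kept. The factor `1 / 2` puts `inn (t / 2) i` in the interior of the cap cut off by the line
`ψ i = ψ i (v i) - t` through `mid t i`. -/
def split (δ : κ → Plane) (t : ℝ) : (ι ⊕ ι) ⊕ κ → Plane :=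
  Sum.elim (Sum.elim (D.mid t) (D.inn (t / 2))) δ

/-- The index of the limit of a member of `split` as `t` tends to `0`. -/
def proj : (ι ⊕ ι) ⊕ κ → ι ⊕ κ := Sum.map (Sum.elim id id) id

theorem split_tendsto (δ : κ → Plane) (a : (ι ⊕ ι) ⊕ κ) :
    Tendsto (fun t => D.split δ t a) (𝓝[>] 0) (𝓝 (Sum.elim D.v δ (proj a))) := by
  rcases a with (i | i) | k
  · have : Continuous fun t : ℝ => D.mid t i := by unfold mid; fun_prop
    have h := this.tendsto 0
    simp only [mid, zero_div, zero_smul, add_zero] at h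
    exact h.mono_left nhdsWithin_le_nhds
  · have : Continuous fun t : ℝ => D.inn (t / 2) i := by unfold inn; fun_prop
    have h := this.tendsto 0
    simp only [inn, zero_div, zero_smul, add_zero] at h
    exact h.mono_left nhdsWithin_le_nhds
  · exact tendsto_const_nhds

theorem pair_of_proj_eq (a b : (ι ⊕ ι) ⊕ κ) (hab : a ≠ b)
    (h : (proj a : ι ⊕ κ) = proj b) :
    (∃ i, a = Sum.inl (Sum.inl i) ∧ b = Sum.inl (Sum.inr i)) ∨
      (∃ i, a = Sum.inl (Sum.inr i) ∧ b = Sum.inl (Sum.inl i)) := by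
  rcases a with (i | i) | k <;> rcases b with (j | j) | l <;> simp_all [proj]

/-- The inequalities and incidences that hold for all small `t > 0`: `mid t i` strictly minimises
`ξ i` over the family `split δ t`, everything that does not tend to `v i` lies outside the cap
`{x ∈ P | ψ i (v i) - t ≤ ψ i x}`, the caps are pairwise disjoint, and no tail whose source and end
have different limits, with the end not tending to `v i`, meets the `i`-th cap. -/
structure Fine (δ : κ → Plane) (t : ℝ) : Prop where
  pos : 0 < t
  ltα : ∀ i, t < D.α i
  ltβ : ∀ i, t < D.β i
  mem : ∀ a, D.split δ t a ∈ P
  ξ_lt : ∀ i a, a ≠ Sum.inl (Sum.inl i) → D.ξ i (D.v i) < D.ξ i (D.split δ t a)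
  ψ_lt : ∀ i a, proj a ≠ Sum.inl i → D.ψ i (D.split δ t a) < D.ψ i (D.v i) - t
  disj : ∀ i j, i ≠ j → ∀ x ∈ P, D.ψ i (D.v i) - t ≤ D.ψ i x → ¬ D.ψ j (D.v j) - t ≤ D.ψ j x
  seg : ∀ i c d, (proj c : ι ⊕ κ) ≠ proj d → (proj d : ι ⊕ κ) ≠ Sum.inl i → ∀ x ∈ P,
    D.ψ i (D.v i) - t ≤ D.ψ i x → D.split δ t d ∉ segment ℝ (D.split δ t c) x

theorem eventually_fine [Finite ι] [Finite κ] {δ : κ → Plane} (hδ : ∀ k, δ k ∈ P)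
    (hG : Good P (Sum.elim D.v δ)) (hξδ : ∀ i k, D.ξ i (D.v i) < D.ξ i (δ k)) :
    ∀ᶠ t in 𝓝[>] (0 : ℝ), D.Fine δ t := by
  have hmem : ∀ a : ι ⊕ κ, Sum.elim D.v δ a ∈ P := by
    rintro (i | k)
    · exact D.hv i
    · exact hδ k
  have hl : Tendsto id (𝓝[>] (0 : ℝ)) (𝓝 0) := nhdsWithin_le_nhds
  have h0 : ∀ᶠ t in 𝓝[>] (0 : ℝ), 0 < t := self_mem_nhdsWithin
  have hα : ∀ᶠ t in 𝓝[>] (0 : ℝ), ∀ i, t < D.α i := by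
    rw [eventually_all]
    exact fun i => nhdsWithin_le_nhds (gt_mem_nhds (D.α_pos i))
  have hβ : ∀ᶠ t in 𝓝[>] (0 : ℝ), ∀ i, t < D.β i := by
    rw [eventually_all]
    exact fun i => nhdsWithin_le_nhds (gt_mem_nhds (D.β_pos i))
  have hψ : ∀ᶠ t in 𝓝[>] (0 : ℝ), ∀ i, ∀ a : (ι ⊕ ι) ⊕ κ, proj a ≠ Sum.inl i →
      D.ψ i (D.split δ t a) < D.ψ i (D.v i) - t := by
    simp only [eventually_all (ι := ι), eventually_all (ι := (ι ⊕ ι) ⊕ κ)]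
    intro i a
    rw [eventually_imp_distrib_left]
    intro ha
    have h1 := (((D.ψ i).continuous.tendsto _).comp (D.split_tendsto δ a)).add hl
    have h2 : D.ψ i (Sum.elim D.v δ (proj a)) + 0 < D.ψ i (D.v i) := by
      rw [add_zero]
      exact D.ψ_lt (hmem _) fun h => ha (hG.injective hmem (a₂ := Sum.inl i) h)
    filter_upwards [h1.eventually (gt_mem_nhds h2)] with t ht
    exact lt_sub_iff_add_lt.mpr ht
  have hdisj : ∀ᶠ t in 𝓝[>] (0 : ℝ), ∀ i j, i ≠ j → ∀ x ∈ P,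
      D.ψ i (D.v i) - t ≤ D.ψ i x → ¬ D.ψ j (D.v j) - t ≤ D.ψ j x := by
    simp only [eventually_all (ι := ι)]
    intro i j
    rw [eventually_imp_distrib_left]
    intro hij
    exact ev_cap_disjoint D.compact _ _ (D.hψ i) (D.hψ j) (fun h => hij (D.v_inj h)) hl
  have hseg : ∀ᶠ t in 𝓝[>] (0 : ℝ), ∀ i, ∀ c d : (ι ⊕ ι) ⊕ κ,
      (proj c : ι ⊕ κ) ≠ proj d → (proj d : ι ⊕ κ) ≠ Sum.inl i → ∀ x ∈ P,
      D.ψ i (D.v i) - t ≤ D.ψ i x → D.split δ t d ∉ segment ℝ (D.split δ t c) x := by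
    simp only [eventually_all (ι := ι), eventually_all (ι := (ι ⊕ ι) ⊕ κ)]
    intro i c d
    simp only [eventually_imp_distrib_left]
    intro hcd hd
    exact ev_cap D.compact _ (D.hψ i) hl (D.split_tendsto δ c) (D.split_tendsto δ d)
      (hG.notMem_segment hmem (b := Sum.inl i) hcd hd)
  filter_upwards [h0, hα, hβ, hψ, hdisj, hseg] with t h0 hα hβ hψ hdisj hseg
  refine ⟨h0, hα, hβ, ?_, ?_, hψ, hdisj, hseg⟩
  · rintro ((i | i) | k)
    · exact D.mid_mem h0.le (hα i).le
    · exact D.inn_mem (by linarith) (by linarith [hβ i])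
    · exact hδ k
  · rintro i ((j | j) | k) ha
    · exact D.ξ_mid_lt h0 (hα j) (fun h => ha (h ▸ rfl))
    · exact D.ξ_inn_lt i (by linarith) (by linarith [hβ j])
    · exact hξδ i k

variable {D} {δ : κ → Plane} {t : ℝ}

/-- Every tail ending at `mid t i` is trivial. -/
theorem Fine.eq_of_mem_segment (h : D.Fine δ t) {i : ι} {a : (ι ⊕ ι) ⊕ κ}
    (ha : a ≠ Sum.inl (Sum.inl i)) {x : Plane} (hx : x ∈ P)
    (hs : D.mid t i ∈ segment ℝ (D.split δ t a) x) : x = D.mid t i := by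
  refine tail_eq (ψ := - D.ξ i) ?_ ?_ hs
  · simpa [D.ξ_mid] using D.hξ i x hx
  · simpa [D.ξ_mid] using h.ξ_lt i a ha

/-- The tail from `mid t i` through `inn (t / 2) i` stays in the `i`-th cap, since `ψ i` increases
along it. -/
theorem Fine.mem_cap_of_mem_segment (h : D.Fine δ t) {i : ι} {x : Plane}
    (hs : D.inn (t / 2) i ∈ segment ℝ (D.mid t i) x) : D.ψ i (D.v i) - t ≤ D.ψ i x := by
  by_contra! hx
  have := seg_le (D.ψ_mid t i).le hx.le hs
  rw [D.ψ_inn] at this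
  linarith [h.pos]

/-- A point of `P` on the chord `ψ i = ψ i (v i) - t` lies on no tail that does not involve
`mid t i`. -/
theorem Fine.false_of_cap (h : D.Fine δ t) {i : ι} {c d : (ι ⊕ ι) ⊕ κ} (hcd : c ≠ d)
    (hc : c ≠ Sum.inl (Sum.inl i)) (hd : d ≠ Sum.inl (Sum.inl i)) {x : Plane} (hx : x ∈ P)
    (hxψ : D.ψ i x = D.ψ i (D.v i) - t) : D.split δ t d ∉ segment ℝ (D.split δ t c) x := by
  intro hs
  by_cases hdi : (proj d : ι ⊕ κ) = Sum.inl i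
  · rcases pair_of_proj_eq d (Sum.inl (Sum.inl i)) hd hdi with ⟨j, -, h'⟩ | ⟨j, rfl, h'⟩
    · cases h'
    obtain rfl : i = j := Sum.inl_injective (Sum.inl_injective h')
    have hci : (proj c : ι ⊕ κ) ≠ Sum.inl i := by
      intro hci
      rcases pair_of_proj_eq c (Sum.inl (Sum.inl i)) hc hci with ⟨j, -, h''⟩ | ⟨j, rfl, h''⟩
      · cases h''
      · obtain rfl : i = j := Sum.inl_injective (Sum.inl_injective h'')
        exact hcd rfl
    have := seg_le (h.ψ_lt i c hci).le hxψ.le hs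
    change D.ψ i (D.inn (t / 2) i) ≤ _ at this
    rw [D.ψ_inn] at this
    linarith [h.pos]
  by_cases hcd' : (proj c : ι ⊕ κ) = proj d
  · rcases pair_of_proj_eq c d hcd hcd' with ⟨k, rfl, rfl⟩ | ⟨k, rfl, rfl⟩
    · refine h.disj i k (fun e => hdi (e ▸ rfl)) x hx hxψ.ge (h.mem_cap_of_mem_segment hs)
    · have := h.eq_of_mem_segment hcd hx hs
      subst this
      exact h.disj i k (fun e => hdi (e ▸ rfl)) _ hx hxψ.ge (D.ψ_mid t k).ge
  · exact h.seg i c d hcd' hdi x hx hxψ.ge hs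

/-- Splitting every vertex keeps the family good. -/
theorem eventually_split_good [Finite ι] [Finite κ] (hδ : ∀ k, δ k ∈ P)
    (hG : Good P (Sum.elim D.v δ)) (hξδ : ∀ i k, D.ξ i (D.v i) < D.ξ i (δ k)) :
    ∀ᶠ t in 𝓝[>] (0 : ℝ), Good P (D.split δ t) := by
  have hmem : ∀ a : ι ⊕ κ, Sum.elim D.v δ a ∈ P := by
    rintro (i | k)
    · exact D.hv i
    · exact hδ k
  have hev := D.eventually_fine hδ hG hξδ
  refine good_perturb D.compact hmem hG proj (D.split_tendsto δ)
    (fun b => ∃ i, b = Sum.inl (Sum.inl i)) ?_ ?_ ?_ ?_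
  · intro b d hb hd h
    by_contra hbd
    rcases pair_of_proj_eq b d hbd h with ⟨k, rfl, -⟩ | ⟨k, -, rfl⟩
    · exact hb ⟨k, rfl⟩
    · exact hd ⟨k, rfl⟩
  · filter_upwards [hev] with t h
    rintro _ ⟨i, rfl⟩ a ha x hx hs
    exact h.eq_of_mem_segment ha hx hs
  · filter_upwards [hev] with t h
    rintro _ ⟨i, rfl⟩ c d hcd hdi hs
    by_cases hc : c = Sum.inl (Sum.inl i)
    · subst hc
      have h1 := h.ξ_lt i d hdi
      have h2 : D.split δ t d = D.mid t i := by simpa [split] using hs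
      rw [h2, D.ξ_mid] at h1
      exact lt_irrefl _ h1
    · exact h.false_of_cap hcd hc hdi (h.mem (Sum.inl (Sum.inl i))) (D.ψ_mid t i) hs
  · filter_upwards [hev] with t h
    rintro a b c d hab hb hd hne hcd hac hbd ⟨x, hx, h1, h2⟩
    rcases pair_of_proj_eq a b hne hab with ⟨i, rfl, rfl⟩ | ⟨i, -, rfl⟩
    swap
    · exact hb ⟨i, rfl⟩
    have hxi := h.mem_cap_of_mem_segment h1
    have hdi : (proj d : ι ⊕ κ) ≠ Sum.inl i := by
      intro hdi
      rcases pair_of_proj_eq d (Sum.inl (Sum.inl i)) (fun e => hd ⟨i, e⟩) hdi with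
        ⟨j, -, h'⟩ | ⟨j, rfl, h'⟩
      · cases h'
      · obtain rfl : i = j := Sum.inl_injective (Sum.inl_injective h')
        exact hbd rfl
    by_cases hcd' : (proj c : ι ⊕ κ) = proj d
    · rcases pair_of_proj_eq c d hcd hcd' with ⟨k, rfl, rfl⟩ | ⟨k, rfl, rfl⟩
      · exact h.disj i k (fun e => hdi (e ▸ rfl)) x hx hxi (h.mem_cap_of_mem_segment h2)
      · exact hd ⟨k, rfl⟩
    · exact h.seg i c d hcd' hdi x hx hxi h2

/-- After splitting, each point `mid t i` is doubled along the chord `ψ i = ψ i (v i) - t`. So every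
vertex gives rise to three guards. -/
theorem exists_good [Finite ι] [Finite κ] (hδ : ∀ k, δ k ∈ P)
    (hG : Good P (Sum.elim D.v δ)) (hξδ : ∀ i k, D.ξ i (D.v i) < D.ξ i (δ k)) :
    ∃ g : ((ι ⊕ ι) ⊕ κ) ⊕ ι → Plane, (∀ a, g a ∈ P) ∧ Good P g := by
  obtain ⟨t, h, hgood⟩ :=
    ((D.eventually_fine hδ hG hξδ).and (eventually_split_good hδ hG hξδ)).exists
  -- the doubling direction is the chord bounding the cap, as `inn t i` also lies on it
  have hray : ∀ i x, x ∈ Ray (D.mid t i) (D.inn t i) → D.ψ i x = D.ψ i (D.v i) - t := by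
    rintro i _ ⟨s, hs, rfl⟩
    simp [D.ψ_mid, D.ψ_inn]
  have hw : ∀ i, D.inn t i ∈ P := fun i => D.inn_mem h.pos.le (h.ltβ i).le
  have key := dbl_good D.compact D.convex h.mem hgood (e := fun i => Sum.inl (Sum.inl i))
    (fun i j hij => Sum.inl_injective (Sum.inl_injective hij)) (w := D.inn t) hw
    (fun i => - D.ξ i) ?_ ?_ ?_ ?_ ?_ ?_
  · have h0 : ∀ᶠ ε in 𝓝[>] (0 : ℝ), 0 < ε := self_mem_nhdsWithin
    have h1 : ∀ᶠ ε in 𝓝[>] (0 : ℝ), ε < 1 := nhdsWithin_le_nhds (gt_mem_nhds one_pos)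
    obtain ⟨ε, hε, hε0, hε1⟩ := (key.and (h0.and h1)).exists
    exact ⟨_, dbl_mem D.convex h.mem _ hw hε0 hε1, hε⟩
  · intro i x hx
    change - D.ξ i x ≤ - D.ξ i (D.mid t i)
    rw [D.ξ_mid]
    exact neg_le_neg (D.hξ i x hx)
  · intro i a ha
    change - D.ξ i _ < - D.ξ i (D.mid t i)
    rw [D.ξ_mid]
    exact neg_lt_neg (h.ξ_lt i a ha)
  · intro i
    change - D.ξ i _ < - D.ξ i (D.mid t i)
    rw [D.ξ_mid]
    exact neg_lt_neg (D.ξ_inn_lt i h.pos (h.ltβ i).le)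
  · intro i j hij x hx hi hj
    exact h.disj i j hij x hx (hray i x hi).ge (hray j x hj).ge
  · intro i a ha hR
    have hψ := hray i _ hR
    by_cases hai : (proj a : ι ⊕ κ) = Sum.inl i
    · rcases pair_of_proj_eq a (Sum.inl (Sum.inl i)) ha hai with ⟨j, -, h'⟩ | ⟨j, rfl, h'⟩
      · cases h'
      · obtain rfl : i = j := Sum.inl_injective (Sum.inl_injective h')
        change D.ψ i (D.inn (t / 2) i) = _ at hψ
        rw [D.ψ_inn] at hψ
        linarith [h.pos]
    · exact (h.ψ_lt i a hai).ne hψ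
  · intro i c d hcd hc hd x hx hR
    exact h.false_of_cap hcd hc hd hx (hray i x hR)

end PolygonFrame

/-! ### Frames of convex polygons and the companions of the vertices -/

/-- The functional `w ↦ det (u, w)`. -/
def detL (u : Plane) : Plane →L[ℝ] ℝ :=
  u 0 • (EuclideanSpace.proj 1 : Plane →L[ℝ] ℝ) - u 1 • (EuclideanSpace.proj 0 : Plane →L[ℝ] ℝ)

theorem detL_apply (u w : Plane) : detL u w = u 0 * w 1 - u 1 * w 0 := by
  simp [detL]

/-- A vertex of a polygon is the unique maximiser of some functional on it. -/
theorem exists_separating {V : Finset Plane} {P : Set Plane} (hV : 3 ≤ V.card)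
    (hP : P = convexHull ℝ (V : Set Plane)) {p : Plane} (hp : p ∈ V)
    (hext : p ∈ Set.extremePoints ℝ P) :
    ∃ ψ : Plane →L[ℝ] ℝ, ∀ x ∈ P, ψ p ≤ ψ x → x = p := by
  set W : Set Plane := (V : Set Plane) \ {p} with hW
  have hWfin : W.Finite := V.finite_toSet.subset sdiff_subset
  have hVsub : (V : Set Plane) ⊆ P := hP ▸ subset_convexHull ℝ _
  have hPc : Convex ℝ P := hP ▸ convex_convexHull ℝ _
  have hpW : p ∉ convexHull ℝ W := by
    intro h
    have hsub : convexHull ℝ W ⊆ P \ {p} :=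
      convexHull_min (sdiff_subset_sdiff_left hVsub) (hPc.mem_extremePoints_iff_convex_sdiff.mp hext).2
    exact (hsub h).2 rfl
  have hne : W.Nonempty := by
    obtain ⟨q, hq, hqp⟩ := V.exists_mem_ne (by omega) p
    exact ⟨q, hq, hqp⟩
  obtain ⟨ψ, u, h1, h2⟩ := geometric_hahn_banach_closed_point (convex_convexHull ℝ W)
    (hWfin.isCompact_convexHull (𝕜 := ℝ)).isClosed hpW
  refine ⟨ψ, fun x hx hpx => ?_⟩
  have hins : (V : Set Plane) = insert p W := by
    rw [hW, insert_sdiff_singleton, insert_eq_of_mem (Finset.mem_coe.mpr hp)]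
  rw [hP, hins, convexHull_insert hne, convexJoin_singleton_left, mem_iUnion₂] at hx
  obtain ⟨y, hy, hxy⟩ := hx
  obtain ⟨s, ⟨h0, -⟩, rfl⟩ := mem_segment_iff'.mp hxy
  have hyu := h1 y hy
  simp only [map_add, map_smul, map_sub, smul_eq_mul] at hpx
  have hs : s = 0 := by nlinarith
  simp [hs]

theorem mem_segment_of_det_eq_zero {a b c : Plane} (hab : a ≠ b)
    (h : detL (b - a) (c - a) = 0) :
    b ∈ segment ℝ a c ∨ c ∈ segment ℝ b a ∨ a ∈ segment ℝ c b := by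
  have hcol : Collinear ℝ {a, b, c} := by
    rw [collinear_iff_of_mem (p₀ := a) (by simp)]
    refine ⟨b - a, ?_⟩
    have hpos : ((b - a) 0) ^ 2 + ((b - a) 1) ^ 2 ≠ 0 := by
      intro h0
      apply hab
      have e0 : (b - a) 0 = 0 := by nlinarith [sq_nonneg ((b - a) 0), sq_nonneg ((b - a) 1)]
      have e1 : (b - a) 1 = 0 := by nlinarith [sq_nonneg ((b - a) 0), sq_nonneg ((b - a) 1)]
      refine (sub_eq_zero.mp ?_).symm
      ext i
      fin_cases i
      · exact e0
      · exact e1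
    rintro p (rfl | rfl | rfl)
    · exact ⟨0, by simp⟩
    · exact ⟨1, by simp⟩
    · refine ⟨((b - a) 0 * (p - a) 0 + (b - a) 1 * (p - a) 1) /
        (((b - a) 0) ^ 2 + ((b - a) 1) ^ 2), ?_⟩
      rw [detL_apply] at h
      rw [vadd_eq_add, ← sub_eq_iff_eq_add]
      ext i
      fin_cases i
      · change (p - a) 0 = _ * (b - a) 0
        field_simp
        linear_combination -(b - a) 1 * h
      · change (p - a) 1 = _ * (b - a) 1
        field_simp
        linear_combination (b - a) 0 * h
  simpa only [mem_segment_iff_wbtw] using hcol.wbtw_or_wbtw_or_wbtw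

/-- The neighbour of the vertex `v i` in positive direction. In the coordinates `(ψ, χ)` the vectors
`v k - v i` lie in an open half-plane, and the neighbour is the one of extreme slope. -/
theorem exists_next {ι : Type*} [Finite ι] {v : ι → Plane} {ψ : Plane →L[ℝ] ℝ} {i : ι}
    (hψ : ∀ k, k ≠ i → ψ (v k) < ψ (v i)) (hne : ∃ k, k ≠ i)
    (hdet : ∀ j k, j ≠ i → k ≠ i → j ≠ k → detL (v j - v i) (v k - v i) ≠ 0) :
    ∃ j, j ≠ i ∧ ∀ k, k ≠ i → k ≠ j → 0 < detL (v j - v i) (v k - v i) := by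
  set p : ℝ := ψ (EuclideanSpace.single 0 1)
  set q : ℝ := ψ (EuclideanSpace.single 1 1)
  have hψc : ∀ x : Plane, ψ x = p * x 0 + q * x 1 := by
    intro x
    have : x = x 0 • EuclideanSpace.single 0 (1 : ℝ) + x 1 • EuclideanSpace.single 1 (1 : ℝ) := by
      ext j
      fin_cases j <;> simp
    conv_lhs => rw [this]
    simp only [map_add, map_smul, smul_eq_mul]
    ring
  -- `χ` is `ψ` composed with a quarter turn
  let χ : Plane → ℝ := fun x => p * x 1 - q * x 0
  have hid : ∀ u w : Plane, detL u w * (p ^ 2 + q ^ 2) = ψ u * χ w - ψ w * χ u := by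
    intro u w
    rw [detL_apply, hψc, hψc]
    ring
  obtain ⟨k₀, hk₀⟩ := hne
  have : Nonempty {k // k ≠ i} := ⟨⟨k₀, hk₀⟩⟩
  obtain ⟨⟨j, hj⟩, hmax⟩ := Finite.exists_max fun k : {k // k ≠ i} =>
    χ (v k - v i) / (- ψ (v k - v i))
  refine ⟨j, hj, fun k hk hkj => lt_of_le_of_ne ?_ (hdet j k hj hk hkj.symm).symm⟩
  have hm := hmax ⟨k, hk⟩
  have hpk : 0 < - ψ (v k - v i) := by
    rw [map_sub]
    linarith [hψ k hk]
  have hpj : 0 < - ψ (v j - v i) := by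
    rw [map_sub]
    linarith [hψ j hj]
  rw [div_le_div_iff₀ hpk hpj] at hm
  have h0 : 0 ≤ detL (v j - v i) (v k - v i) * (p ^ 2 + q ^ 2) := by
    rw [hid]
    linarith
  have hpq : 0 < p ^ 2 + q ^ 2 := by
    rcases eq_or_ne p 0 with hp | hp
    · rcases eq_or_ne q 0 with hq | hq
      · rw [hψc, hp, hq] at hpk
        simp at hpk
      · positivity
    · positivity
  exact nonneg_of_mul_nonneg_left h0 hpq

theorem exists_third {ι : Type*} [Fintype ι] (h : 3 ≤ Fintype.card ι) (i j : ι) :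
    ∃ k, k ≠ i ∧ k ≠ j := by
  classical
  obtain ⟨k, -, hk⟩ := Finset.exists_mem_notMem_of_card_lt_card
    (s := {i, j}) (t := Finset.univ) (lt_of_le_of_lt Finset.card_le_two h)
  exact ⟨k, by simpa using hk⟩

/-- Every convex polygon has a frame; the point `o` is the centroid of the vertices. -/
theorem nonempty_frame {n : ℕ} {V : Finset Plane} {P : Set Plane} (hP : IsConvexPolygon n V P) :
    Nonempty (PolygonFrame V P) := by
  obtain ⟨hn, hcard, hPV, hext⟩ := hP
  have hV : 3 ≤ V.card := hcard ▸ hn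
  have hcardι : 3 ≤ Fintype.card V := by simpa using hV
  let v : V → Plane := Subtype.val
  have hinj : Function.Injective v := Subtype.val_injective
  have hv : ∀ i, v i ∈ P := fun i => hPV ▸ subset_convexHull ℝ _ i.2
  have hPc : Convex ℝ P := hPV ▸ convex_convexHull ℝ _
  have hPk : IsCompact P := hPV ▸ V.finite_toSet.isCompact_convexHull (𝕜 := ℝ)
  choose ψ hψ using fun i : V => exists_separating hV hPV i.2 (hext i i.2)
  have hlt : ∀ i k, k ≠ i → ψ i (v k) < ψ i (v i) := fun i k h =>
    lt_of_not_ge fun h' => h (hinj (hψ i _ (hv k) h'))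
  have hseg : ∀ i j k, i ≠ j → j ≠ k → v j ∉ segment ℝ (v i) (v k) := fun i j k hij hjk h =>
    hjk (hinj (tail_eq (hlt j k hjk.symm).le (hlt j i hij) h)).symm
  have hdet : ∀ i j k, j ≠ i → k ≠ i → j ≠ k → detL (v j - v i) (v k - v i) ≠ 0 := by
    intro i j k hji hki hjk h
    rcases mem_segment_of_det_eq_zero (fun h => hji (hinj h).symm) h with h | h | h
    · exact hseg i j k hji.symm hjk h
    · exact hseg j k i hjk hki h
    · exact hseg k i j hki hji.symm h
  choose nx hnx hpos using fun i => exists_next (hlt i)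
    ((exists_third hcardι i i).imp fun _ h => h.1) (hdet i)
  have hξlt : ∀ i k, k ≠ i → k ≠ nx i →
      detL (v (nx i) - v i) (v i) < detL (v (nx i) - v i) (v k) := by
    intro i k h1 h2
    have := hpos i k h1 h2
    rw [map_sub] at this
    linarith
  have hξnx : ∀ i, detL (v (nx i) - v i) (v (nx i)) = detL (v (nx i) - v i) (v i) := by
    intro i
    rw [← sub_eq_zero, ← map_sub, detL_apply]
    ring
  have hξle : ∀ i k, detL (v (nx i) - v i) (v i) ≤ detL (v (nx i) - v i) (v k) := by
    intro i k
    by_cases h1 : k = i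
    · rw [h1]
    by_cases h2 : k = nx i
    · rw [h2, hξnx]
    exact (hξlt i k h1 h2).le
  have hn0 : (0 : ℝ) < Fintype.card V := by exact_mod_cast (by omega : 0 < Fintype.card V)
  have hsum : ∑ _i : V, (Fintype.card V : ℝ)⁻¹ = 1 := by
    rw [Finset.sum_const, Finset.card_univ, nsmul_eq_mul, mul_inv_cancel₀ hn0.ne']
  refine ⟨{ v := v, o := ∑ i, (Fintype.card V : ℝ)⁻¹ • v i, nx := nx, ψ := ψ,
            ξ := fun i => detL (v (nx i) - v i), compact := hPk, convex := hPc, hv := hv,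
            ho := ?_, v_inj := hinj, hψ := hψ, nx_ne := hnx, nx_nx_ne := ?_, hξ := ?_,
            ξ_nx := hξnx, ξ_lt := hξlt, ξ_o := ?_ }⟩
  · exact hPc.sum_mem (fun _ _ => by positivity) hsum fun i _ => hv i
  · -- otherwise a third vertex would lie strictly on both sides of the edge
    intro i h
    obtain ⟨k, hk1, hk2⟩ := exists_third hcardι i (nx i)
    have h1 := hpos i k hk1 hk2
    have h2 := hpos (nx i) k hk2 (h.symm ▸ hk1)
    rw [h] at h2
    simp only [detL_apply, PiLp.sub_apply] at h1 h2
    linarith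
  · intro i x hx
    have hsub : P ⊆ {x | detL (v (nx i) - v i) (v i) ≤ detL (v (nx i) - v i) x} := by
      rw [hPV]
      refine convexHull_min (fun x hx => hξle i ⟨x, hx⟩)
        (convex_halfSpace_ge (detL (v (nx i) - v i)).isLinear _)
    exact hsub hx
  · intro i
    obtain ⟨k, hk1, hk2⟩ := exists_third hcardι i (nx i)
    rw [map_sum]
    calc detL (v (nx i) - v i) (v i)
        = ∑ _k : V, (Fintype.card V : ℝ)⁻¹ * detL (v (nx i) - v i) (v i) := by
          rw [← Finset.sum_mul, hsum, one_mul]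
      _ < _ := by
          refine Finset.sum_lt_sum (fun j _ => ?_) ⟨k, Finset.mem_univ _, ?_⟩
          · rw [map_smul, smul_eq_mul]
            exact mul_le_mul_of_nonneg_left (hξle i j) (by positivity)
          · rw [map_smul, smul_eq_mul]
            exact mul_lt_mul_of_pos_left (hξlt i k hk1 hk2) (by positivity)

/-- A functional `x₀ - s x₁` separates finitely many points for all but finitely many `s`. -/
theorem exists_injective_functional {ι : Type*} [Finite ι] {v : ι → Plane}
    (hv : Function.Injective v) : ∃ φ : Plane →L[ℝ] ℝ, Function.Injective fun i => φ (v i) := by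
  obtain ⟨s, hs⟩ := (Set.finite_range fun p : ι × ι =>
    (v p.1 0 - v p.2 0) / (v p.1 1 - v p.2 1)).exists_notMem
  refine ⟨(EuclideanSpace.proj 0 : Plane →L[ℝ] ℝ) - s • (EuclideanSpace.proj 1 : Plane →L[ℝ] ℝ),
    fun i j hij => hv ?_⟩
  have h : v i 0 - s * v i 1 = v j 0 - s * v j 1 := by simpa using hij
  have h1 : v i 1 = v j 1 := by
    by_contra hne
    refine hs ⟨(i, j), ?_⟩
    rw [div_eq_iff (sub_ne_zero.mpr hne)]
    linarith
  ext k
  fin_cases k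
  · rw [h1] at h
    change v i 0 = v j 0
    linarith
  · exact h1

namespace PolygonFrame

variable {ι : Type*} {P : Set Plane} (D : PolygonFrame ι P)

/-- The vertices form a good family: all tails ending at a vertex are trivial. -/
theorem good_v : Good P D.v := by
  rintro a b c d hab hcd hac hbd ⟨x, hx, h1, h2⟩
  have tail : ∀ a b, a ≠ b → D.v b ∈ segment ℝ (D.v a) x → x = D.v b := fun a b hab h =>
    D.hψ b x hx (by
      by_contra! hlt
      exact hlt.ne (by rw [tail_eq hlt.le (D.ψ_lt (D.hv a) fun h => hab (D.v_inj h)) h]))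
  exact hbd (D.v_inj ((tail a b hab h1).symm.trans (tail c d hcd h2)))

/-- Let `φ` be injective on the vertices, with minimum at `v i₀` and maximum at `v i₁`. The other
`n - 2` vertices can be doubled along the parallel lines on which `φ` is constant, towards the
segment from `v i₀` to `v i₁`. The doubles lie on no edge line of the polygon. -/
theorem exists_inner [Fintype ι] (hι : 3 ≤ Fintype.card ι) :
    ∃ (i₀ i₁ : ι) (δ : {i // i ≠ i₀ ∧ i ≠ i₁} → Plane), i₀ ≠ i₁ ∧ (∀ k, δ k ∈ P) ∧
      Good P (Sum.elim D.v δ) ∧ ∀ i k, D.ξ i (D.v i) < D.ξ i (δ k) := by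
  obtain ⟨φ, hφ⟩ := exists_injective_functional D.v_inj
  have : Nonempty ι := Fintype.card_pos_iff.mp (by omega)
  obtain ⟨i₀, h₀⟩ := Finite.exists_min fun i => φ (D.v i)
  obtain ⟨i₁, h₁⟩ := Finite.exists_max fun i => φ (D.v i)
  have hlt₀ : ∀ j, j ≠ i₀ → φ (D.v i₀) < φ (D.v j) := fun j hj =>
    lt_of_le_of_ne (h₀ j) fun h => hj (hφ h).symm
  have hlt₁ : ∀ j, j ≠ i₁ → φ (D.v j) < φ (D.v i₁) := fun j hj =>
    lt_of_le_of_ne (h₁ j) fun h => hj (hφ h)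
  obtain ⟨k₀, hk₀, hk₁⟩ := exists_third hι i₀ i₁
  have h01 : φ (D.v i₀) < φ (D.v i₁) := (hlt₀ k₀ hk₀).trans (hlt₁ k₀ hk₁)
  have hne : i₀ ≠ i₁ := fun h => h01.ne (by rw [h])
  let lam : ι → ℝ := fun j => (φ (D.v j) - φ (D.v i₀)) / (φ (D.v i₁) - φ (D.v i₀))
  let w : {i // i ≠ i₀ ∧ i ≠ i₁} → Plane := fun j => D.v i₀ + lam j • (D.v i₁ - D.v i₀)
  have hlam : ∀ j : {i // i ≠ i₀ ∧ i ≠ i₁}, 0 < lam j ∧ lam j < 1 := fun j =>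
    ⟨div_pos (sub_pos.mpr (hlt₀ j j.2.1)) (sub_pos.mpr h01),
      (div_lt_one (sub_pos.mpr h01)).mpr (sub_lt_sub_right (hlt₁ j j.2.2) _)⟩
  have hwseg : ∀ j, w j ∈ segment ℝ (D.v i₀) (D.v i₁) := fun j =>
    mem_segment_iff'.mpr ⟨lam j, ⟨(hlam j).1.le, (hlam j).2.le⟩, rfl⟩
  have hwP : ∀ j, w j ∈ P := fun j => D.convex.segment_subset (D.hv _) (D.hv _) (hwseg j)
  -- `lam` is chosen so that `w j` is on the `φ`-level of `v j`
  have hφw : ∀ j, φ (w j) = φ (D.v j) := by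
    intro j
    have hd : φ (D.v i₁) - φ (D.v i₀) ≠ 0 := (sub_pos.mpr h01).ne'
    simp only [w, lam, map_add, map_smul, map_sub, smul_eq_mul]
    rw [div_mul_cancel₀ _ hd]
    ring
  have hray : ∀ (j : {i // i ≠ i₀ ∧ i ≠ i₁}) x, x ∈ Ray (D.v j) (w j) → φ x = φ (D.v j) := by
    rintro j _ ⟨t, -, rfl⟩
    simp [hφw]
  have key := dbl_good D.compact D.convex D.hv D.good_v
    (e := (Subtype.val : {i // i ≠ i₀ ∧ i ≠ i₁} → ι)) Subtype.val_injective hwP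
    (fun k => D.ψ k) ?_ ?_ ?_ ?_ ?_ ?_
  · have e0 : ∀ᶠ ε in 𝓝[>] (0 : ℝ), 0 < ε := self_mem_nhdsWithin
    have e1 : ∀ᶠ ε in 𝓝[>] (0 : ℝ), ε < 1 := nhdsWithin_le_nhds (gt_mem_nhds one_pos)
    obtain ⟨ε, hε, hε0, hε1⟩ := (key.and (e0.and e1)).exists
    refine ⟨i₀, i₁, fun k => D.v k + ε • (w k - D.v k), hne,
      fun k => D.convex.add_smul_sub_mem (D.hv _) (hwP k) ⟨hε0.le, hε1.le⟩, hε, fun i k => ?_⟩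
    obtain ⟨hl0, hl1⟩ := hlam k
    have hk := D.hξ i _ (D.hv k)
    have hA := D.hξ i _ (D.hv i₀)
    have hB := D.hξ i _ (D.hv i₁)
    have hwk := D.hξ i _ (hwP k)
    have hw' : D.ξ i (w k) = D.ξ i (D.v i₀) + lam k * (D.ξ i (D.v i₁) - D.ξ i (D.v i₀)) := by
      simp [w]
    simp only [map_add, map_smul, map_sub, smul_eq_mul]
    -- of the three vertices `v k`, `v i₀`, `v i₁` at most two are on the `i`-th edge
    by_cases hki : (k : ι) ≠ i ∧ (k : ι) ≠ D.nx i
    · have := D.ξ_lt i k hki.1 hki.2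
      nlinarith
    · have : D.ξ i (D.v i) < D.ξ i (w k) := by
        rw [hw']
        by_cases hi₀ : i₀ ≠ i ∧ i₀ ≠ D.nx i
        · have := D.ξ_lt i i₀ hi₀.1 hi₀.2
          nlinarith
        · have := D.ξ_lt i i₁ (by rintro rfl; grind) (by rintro h; grind)
          nlinarith
      nlinarith
  · intro k x hx
    by_contra! h
    rw [D.hψ k x hx h.le] at h
    exact lt_irrefl _ h
  · exact fun k i hik => D.ψ_lt (D.hv i) fun h => hik (D.v_inj h)
  · refine fun k => D.ψ_lt (hwP k) fun h => ?_
    have := hwseg k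
    rw [h] at this
    exact D.good_v.notMem_segment D.hv k.2.1.symm k.2.2 this
  · intro k l hkl x hx h1 h2
    exact hkl (Subtype.ext (hφ ((hray k x h1).symm.trans (hray l x h2))))
  · exact fun k i hik h => hik (hφ (hray k _ h))
  · intro k c d hcd hck hdk x hx hR hs
    have hxd : x = D.v d := by
      by_contra hne
      exact hne (tail_eq (D.ψ_lt hx hne).le (D.ψ_lt (D.hv c) fun h => hcd (D.v_inj h)) hs)
    rw [hxd] at hR
    exact hdk (hφ (hray k _ hR))

end PolygonFrame

/-- The guards of a good family hide each point of `P` from at most one guard. -/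
theorem Good.hidden_unique {α : Type*} {P : Set Plane} {g : α → Plane}
    (hg : Good P g) (hgP : ∀ a, g a ∈ P) {G : Finset Plane} (hG : (G : Set Plane) = range g)
    {x p q : Plane} (hx : x ∈ P) (hp : p ∈ G) (hq : q ∈ G) (h1 : Hidden G p x)
    (h2 : Hidden G q x) : p = q := by
  have hmem : ∀ y ∈ G, ∃ a, g a = y := fun y hy => by
    rw [← Finset.mem_coe, hG] at hy
    exact hy
  obtain ⟨_, hb, hba, hbx⟩ := h1
  obtain ⟨_, hd, hdc, hdx⟩ := h2
  obtain ⟨a, rfl⟩ := hmem _ hp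
  obtain ⟨c, rfl⟩ := hmem _ hq
  obtain ⟨b, rfl⟩ := hmem _ hb
  obtain ⟨d, rfl⟩ := hmem _ hd
  by_contra hac
  have hac' : a ≠ c := fun h => hac (h ▸ rfl)
  have hab : a ≠ b := fun h => hba (h ▸ rfl)
  have hcd : c ≠ d := fun h => hdc (h ▸ rfl)
  by_cases hbd : b = d
  · -- with a common blocker the two guards are on one ray from it, so one is on a tail ending there
    subst hbd
    have key : ∀ u : Plane, g b ∈ openSegment ℝ u x →
        ∃ r : ℝ, 0 < r ∧ u - g b = r • (g b - x) := by
      rintro u ⟨s, t, hs, ht, hst, h⟩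
      refine ⟨t / s, by positivity, ?_⟩
      have hs' : s = 1 - t := by linarith
      have : s • (u - g b) = t • (g b - x) := by
        rw [← h, hs']
        module
      rw [div_eq_inv_mul, mul_smul, ← this, smul_smul, inv_mul_cancel₀ hs.ne', one_smul]
    obtain ⟨r, hr, hra⟩ := key _ hbx
    obtain ⟨r', hr', hrc⟩ := key _ hdx
    have near : ∀ (a c : α) (r r' : ℝ), a ≠ c → a ≠ b → 0 < r → 0 < r' → r ≤ r' →
        g a - g b = r • (g b - x) → g c - g b = r' • (g b - x) → False := by
      intro a c r r' hac hab hr hr' hrr ha hc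
      refine hg.notMem_segment hgP hac.symm hab (b := b) ?_
      rw [segment_symm]
      refine mem_segment_iff'.mpr ⟨r / r', ⟨by positivity, (div_le_one hr').mpr hrr⟩, ?_⟩
      rw [hc, smul_smul, div_mul_cancel₀ _ hr'.ne', ← ha, add_sub_cancel]
    rcases le_total r r' with h | h
    · exact near a c r r' hac' hab hr hr' h hra hrc
    · exact near c a r' r hac'.symm hcd hr' hr h hrc hra
  · exact hg a b c d hab hcd hac' hbd
      ⟨x, hx, openSegment_subset_segment _ _ _ hbx, openSegment_subset_segment _ _ _ hdx⟩

/-- One can place exactly 4n - 2 guards in a convex n-gon so that every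
point of P is hidden from at most one guard. -/
theorem statement7 (n : ℕ) (V : Finset Plane) (P : Set Plane)
    (hP : IsConvexPolygon n V P) :
    ∃ G : Finset Plane, ↑G ⊆ P ∧ G.card = 4 * n - 2 ∧
      ∀ x ∈ P, ∀ g ∈ G, ∀ g' ∈ G, Hidden G g x → Hidden G g' x → g = g' := by
  classical
  obtain ⟨D⟩ := nonempty_frame hP
  obtain ⟨hn, hcard, -, -⟩ := hP
  obtain ⟨i₀, i₁, δ, hne, hδ, hG, hξ⟩ := D.exists_inner (by simpa [hcard] using hn)
  obtain ⟨g, hgP, hg⟩ := PolygonFrame.exists_good hδ hG hξ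
  have hrange : (Finset.univ.image g : Set Plane) = range g := by simp
  refine ⟨Finset.univ.image g, ?_, ?_, ?_⟩
  · rw [hrange]
    rintro _ ⟨a, rfl⟩
    exact hgP a
  · have hκ : Fintype.card {i : V // i ≠ i₀ ∧ i ≠ i₁} = n - 2 := by
      rw [Fintype.card_subtype]
      have : (Finset.univ.filter fun i : V => i ≠ i₀ ∧ i ≠ i₁) = Finset.univ \ {i₀, i₁} := by
        ext i
        simp
      rw [this, Finset.card_sdiff_of_subset (Finset.subset_univ _), Finset.card_pair hne,
        Finset.card_univ, Fintype.card_coe, hcard]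
    rw [Finset.card_image_of_injective _ (hg.injective hgP), Finset.card_univ]
    simp only [Fintype.card_sum, hκ, Fintype.card_coe, hcard]
    omega
  · intro x hx p hp q hq h1 h2
    exact hg.hidden_unique hgP hrange hx hp hq h1 h2
end
end

section
/- Let P = convexHull ℝ V be a convex n-gon in ℝ² with vertex set V. Call two vertices u, v ∈ V adjacent if u ≠ v and the closed segment from u to v is contained in the frontier of P (so that u v is an edge of P). Let G ⊆ P be a guard set such that no point of P is hidden from two distinct guards of G, and assume the Shrunken Polygon condition: for every adjacent pair u, v ∈ V, either G meets the open segment from u to v, or both u ∈ G and v ∈ G. Let G* = (G ∩ frontier P) ∪ {g ∈ G : g ∈ interior P and g is an extreme point of convexHull ℝ G}. Then |G*| ≤ 2n. -/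
/-! Orient every edge of `P` so that `P` lies on its left: each vertex `v` then has a unique
successor `N v`, and `N` is an injective self-map of `V`, so there are `n` edges `v, N v` and every
vertex is an end of exactly two of them (`exists_next`, `next_inj`). `P` is the intersection of the
corresponding half-planes (`mem_of_cr_nonneg`), so every frontier point is a vertex or lies on an
open edge (`frontier_cases`).

A guard interior to `P` and extreme in the hull of `G` is the strict maximum over `G` of some linear
functional `f`; assign it to a vertex `v` of `P` at which `f` is maximal (`CornerGuard`). A guard
equal to `v` is assigned to `v` too. Two facts hold:

* at most one guard is assigned to each vertex `v` (`Corner.unique`). If `v` is not a guard, the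
  shrunken polygon condition puts guards `a`, `b` on the two open edges at `v`. Two guards `g`, `g'`
  assigned to `v` make `a, g', g, b` a convex chain facing `v`, and the prolongations of `a g'` and
  `b g` meet inside the triangle `a v b`, in a point hidden from both `a` and `b`;
* an open edge has at most two guards (`line3`, `edge_card_le`), and if it has two, then no guard
  is assigned to either of its ends (`Corner.empty`): the prolongation of `b g` would hit the edge
  in a point also hidden from the farther of the two guards on it.

Writing `e v` for the number of guards on the open edge from `v` to `N v` and `c v` for the number of
guards assigned to `v`, this gives `2 e v + c v + c (N v) ≤ 4`. Since `N` permutes `V`, summing over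
`V` yields `2 |G*| ≤ 4 n`. -/

open Set

noncomputable section

/-! ### Corners of the polygon -/

/-- Twice the signed area of the triangle `a b c`; positive if `c` is to the left of `a → b`. -/
def cr (a b c : Plane) : ℝ := (b 0 - a 0) * (c 1 - a 1) - (b 1 - a 1) * (c 0 - a 0)

theorem plane_ext {x y : Plane} (h0 : x 0 = y 0) (h1 : x 1 = y 1) : x = y := by
  ext i; fin_cases i <;> assumption

/-- `w` is the successor of the vertex `v` in counterclockwise order. -/
def IsNext (V : Finset Plane) (v w : Plane) : Prop :=
  w ∈ V ∧ w ≠ v ∧ ∀ x ∈ V, x ≠ v → x ≠ w → 0 < cr v w x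

/-- `g` is a guard interior to `P` strictly maximizing, among all guards, a linear functional whose
maximum on `P` is attained at `v`. -/
def CornerGuard (G : Finset Plane) (P : Set Plane) (v g : Plane) : Prop :=
  g ∈ interior P ∧ ∃ f : Plane →L[ℝ] ℝ, (∀ g' ∈ G, g' ≠ g → f g' < f g) ∧ ∀ x ∈ P, f x ≤ f v

/-- A corner of `P` at `v` with neighbouring vertices `u` and `w`, in a form symmetric in `u` and
`w`, together with the shrunken polygon condition for its two edges. -/
structure Corner (G : Finset Plane) (P : Set Plane) (v u w : Plane) : Prop where
  hv : v ∈ P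
  hu : u ∈ P
  hw : w ∈ P
  indep : cr v u w ≠ 0
  coord : ∀ x ∈ interior P, ∃ s t : ℝ, 0 < s ∧ 0 < t ∧ x = v + s • (u - v) + t • (w - v)
  gu : v ∉ G → ∃ a ∈ G, a ∈ openSegment ℝ v u
  gw : v ∉ G → ∃ a ∈ G, a ∈ openSegment ℝ v w

theorem Corner.symm {G : Finset Plane} {P : Set Plane} {v u w : Plane} (h : Corner G P v u w) :
    Corner G P v w u where
  hv := h.hv
  hu := h.hw
  hw := h.hu
  indep := by
    intro h0
    apply h.indep
    unfold cr at *
    linarith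
  coord := by
    intro x hx
    obtain ⟨s, t, hs, ht, rfl⟩ := h.coord x hx
    exact ⟨t, s, ht, hs, by abel⟩
  gu := h.gw
  gw := h.gu

/-! ### Guards on a line -/

theorem mem_openSegment_of_prolong {b g X : Plane} {l : ℝ} (hl : 1 < l)
    (hX : X = b + l • (g - b)) : g ∈ openSegment ℝ b X := by
  have h0 : 0 < l := by linarith
  have h1 : l⁻¹ < 1 := inv_lt_one_of_one_lt₀ hl
  refine ⟨1 - l⁻¹, l⁻¹, by linarith, by positivity, by ring, ?_⟩
  have : l⁻¹ * l = 1 := inv_mul_cancel₀ h0.ne'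
  rw [hX]
  linear_combination (norm := module) this • (g - b)

theorem mem_openSegment_line {v d : Plane} {r₁ r₂ r : ℝ} (h₁ : r₁ < r₂) (h₂ : r₂ < r) :
    v + r₂ • d ∈ openSegment ℝ (v + r₁ • d) (v + r • d) := by
  have h0 : 0 < r₂ - r₁ := by linarith
  apply mem_openSegment_of_prolong (l := (r - r₁) / (r₂ - r₁))
  · rw [lt_div_iff₀ h0]; linarith
  · have : (r - r₁) / (r₂ - r₁) * (r₂ - r₁) = r - r₁ := div_mul_cancel₀ _ h0.ne'
    linear_combination (norm := module) (-this) • d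

theorem exists_param {v w a : Plane} (h : a ∈ openSegment ℝ v w) :
    ∃ r : ℝ, 0 < r ∧ r < 1 ∧ a = v + r • (w - v) := by
  obtain ⟨p, q, hp, hq, hpq, rfl⟩ := h
  refine ⟨q, hq, by linarith, ?_⟩
  obtain rfl : p = 1 - q := by linarith
  module

/-- Three collinear guards with a point of `P` beyond the last one are impossible, that point being
hidden from the first two. -/
theorem line3 {P : Set Plane} {G : Finset Plane}
    (hno2 : ∀ x ∈ P, ∀ g ∈ G, ∀ g' ∈ G, Hidden G g x → Hidden G g' x → g = g')
    {v d : Plane} {r₁ r₂ r₃ r : ℝ} (hd : d ≠ 0) (h₁ : r₁ < r₂) (h₂ : r₂ < r₃) (h₃ : r₃ < r)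
    (g₁ : v + r₁ • d ∈ G) (g₂ : v + r₂ • d ∈ G) (g₃ : v + r₃ • d ∈ G) (hr : v + r • d ∈ P) :
    False := by
  have inj : ∀ {p q : ℝ}, v + p • d = v + q • d → p = q := by
    intro p q h
    exact smul_left_injective ℝ hd (add_left_cancel h)
  have := inj <| hno2 _ hr _ g₁ _ g₂
    ⟨_, g₂, fun h => h₁.ne' (inj h), mem_openSegment_line h₁ (h₂.trans h₃)⟩
    ⟨_, g₃, fun h => h₂.ne' (inj h), mem_openSegment_line h₂ h₃⟩
  exact h₁.ne this

/-! ### Guards at a corner -/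

theorem triangle_mem {P : Set Plane} (hc : Convex ℝ P) {v a b : Plane} (hv : v ∈ P) (ha : a ∈ P)
    (hb : b ∈ P) {x y : ℝ} (hx : 0 ≤ x) (hy : 0 ≤ y) (hxy : x + y ≤ 1) :
    v + x • (a - v) + y • (b - v) ∈ P := by
  have := hc.sum_mem (t := Finset.univ) (w := ![1 - x - y, x, y]) (z := ![v, a, b])
    (by intro i _; fin_cases i <;> simp <;> linarith)
    (by simp [Fin.sum_univ_three]; ring)
    (by intro i _; fin_cases i <;> simp [*])
  simp only [Fin.sum_univ_three, Matrix.cons_val] at this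
  convert this using 1
  module

/-- The numerical content of a functional `-(p, q)` that is nonpositive on the first quadrant and
larger at `(s, t)` than at `(1, 0)` and `(0, 1)`. -/
theorem quad_bounds {p q s t : ℝ} (hp : 0 ≤ p) (hq : 0 ≤ q) (hs : 0 < s) (ht : 0 < t)
    (h1 : p * s + q * t < p) (h2 : p * s + q * t < q) : 0 < p ∧ 0 < q ∧ s + t < 1 := by
  have hm : 0 ≤ p * s + q * t := by positivity
  have hp' : 0 < p := by linarith
  have hq' : 0 < q := by linarith
  refine ⟨hp', hq', ?_⟩
  by_contra hcon
  have hm' : 0 < p * s + q * t := by positivity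
  nlinarith [mul_le_mul_of_nonneg_left (not_lt.1 hcon) hm'.le]

/-- The data of a corner guard in the affine frame with origin `v` and unit points `a`, `b`. -/
theorem cornerGuard_coord {G : Finset Plane} {P : Set Plane} {v a b g : Plane} {s t : ℝ}
    (hs : 0 < s) (ht : 0 < t) (hgc : g = v + s • (a - v) + t • (b - v))
    (ha : a ∈ G) (hb : b ∈ G) (hag : a ≠ g) (hbg : b ≠ g)
    (haP : a ∈ P) (hbP : b ∈ P) (hg : CornerGuard G P v g) :
    ∃ p q : ℝ, 0 < p ∧ 0 < q ∧ s + t < 1 ∧ p * s + q * t < p ∧ p * s + q * t < q ∧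
      ∀ s' t' : ℝ, v + s' • (a - v) + t' • (b - v) ∈ G →
        v + s' • (a - v) + t' • (b - v) ≠ g → p * s + q * t < p * s' + q * t' := by
  obtain ⟨-, f, hf, hfv⟩ := hg
  have hfg : ∀ x y : ℝ, f (v + x • (a - v) + y • (b - v))
      = f v - ((f v - f a) * x + (f v - f b) * y) := by
    intro x y
    simp only [map_add, map_smul, map_sub, smul_eq_mul]
    ring
  have h1 := hf a ha hag
  have h2 := hf b hb hbg
  rw [hgc, hfg] at h1 h2
  have hp : (f v - f a) * s + (f v - f b) * t < f v - f a := by linarith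
  have hq : (f v - f a) * s + (f v - f b) * t < f v - f b := by linarith
  obtain ⟨h3, h4, h5⟩ := quad_bounds (by linarith [hfv a haP]) (by linarith [hfv b hbP]) hs ht hp hq
  refine ⟨_, _, h3, h4, h5, hp, hq, ?_⟩
  intro s' t' hG hne
  have := hf _ hG hne
  rw [hfg, hgc, hfg] at this
  linarith

/-- The slope comparison saying that `(s, t)` lies beyond the line through `(1, 0)` and
`(s', t')`. -/
theorem slope_ineq {p q s t s' t' : ℝ} (hq : 0 < q) (hs' : s' < 1)
    (h1 : p * s' + q * t' < p) (h2 : p * s' + q * t' < p * s + q * t) (hss : s < s') :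
    t' * (1 - s) < t * (1 - s') := by
  have hA : 0 < (p * (1 - s') - q * t') * (s' - s) :=
    mul_pos (by linarith) (by linarith)
  have hB : 0 < (p * s + q * t - p * s' - q * t') * (1 - s') :=
    mul_pos (by linarith) (by linarith)
  have : 0 < q * (t * (1 - s') - t' * (1 - s)) := by nlinarith
  have := pos_of_mul_pos_right this hq.le
  linarith

/-- Two corner guards `(s, t)` and `(s', t')` with `s < s'`: the prolongations of the segments from
`b` to the first and from `a` to the second meet inside the triangle `v a b`. -/
theorem cross_hidden {P : Set Plane} {G : Finset Plane} (hc : Convex ℝ P)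
    (hno2 : ∀ x ∈ P, ∀ g ∈ G, ∀ g' ∈ G, Hidden G g x → Hidden G g' x → g = g')
    {v a b : Plane} (hv : v ∈ P) (haP : a ∈ P) (hbP : b ∈ P) (ha : a ∈ G) (hb : b ∈ G)
    (hab : a ≠ b) {s t s' t' : ℝ} (hs : 0 < s) (ht' : 0 < t')
    (hg : v + s • (a - v) + t • (b - v) ∈ G) (hg' : v + s' • (a - v) + t' • (b - v) ∈ G)
    (hag' : a ≠ v + s' • (a - v) + t' • (b - v))
    (hbg : b ≠ v + s • (a - v) + t • (b - v))
    (hst : s + t < 1) (hst' : s' + t' < 1)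
    (h1 : t' * (1 - s) < t * (1 - s')) (h2 : s * (1 - t') < s' * (1 - t)) : False := by
  -- `(x, y)` is the intersection of the lines through `(0, 1), (s, t)` and `(1, 0), (s', t')`.
  have hk : 0 < 1 - t := by linarith
  have hh : 0 < 1 - s' := by linarith
  have hD : 0 < (1 - t) * (1 - s') - s * t' := by
    nlinarith [mul_pos (show 0 < 1 - t - s by linarith) hh,
      mul_pos hs (show 0 < 1 - s' - t' by linarith)]
  set D := (1 - t) * (1 - s') - s * t' with hDdef
  set l := (1 - s' - t') / D with hl
  set m := (1 - t - s) / D with hm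
  have hlD : l * D = 1 - s' - t' := div_mul_cancel₀ _ hD.ne'
  have hmD : m * D = 1 - t - s := div_mul_cancel₀ _ hD.ne'
  have hl1 : 1 < l := by rw [hl, lt_div_iff₀ hD]; rw [hDdef]; nlinarith
  have hm1 : 1 < m := by rw [hm, lt_div_iff₀ hD]; rw [hDdef]; nlinarith
  have e1 : l * s = 1 + m * (s' - 1) := by
    apply mul_right_cancel₀ hD.ne'
    rw [hDdef] at *
    linear_combination s * hlD - (s' - 1) * hmD
  have e2 : 1 + l * (t - 1) = m * t' := by
    apply mul_right_cancel₀ hD.ne'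
    rw [hDdef] at *
    linear_combination (t - 1) * hlD - t' * hmD
  have hX : v + (l * s) • (a - v) + (m * t') • (b - v) ∈ P := by
    apply triangle_mem hc hv haP hbP (by positivity) (by positivity)
    nlinarith
  refine hab (hno2 _ hX a ha b hb ⟨_, hg', hag'.symm, ?_⟩ ⟨_, hg, hbg.symm, ?_⟩)
  · apply mem_openSegment_of_prolong hm1
    linear_combination (norm := module) e1 • (a - v)
  · apply mem_openSegment_of_prolong hl1
    linear_combination (norm := module) -e2 • (b - v)

theorem openSegment_subset_of {P : Set Plane} (hc : Convex ℝ P) {v w a : Plane} (hv : v ∈ P)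
    (hw : w ∈ P) (ha : a ∈ openSegment ℝ v w) : a ∈ P :=
  hc.segment_subset hv hw (openSegment_subset_segment _ _ _ ha)

/-- A guard at `v` leaves no room for an interior guard assigned to `v`: no functional maximal over
`P` at `v` can be strictly larger at another guard. -/
theorem cornerGuard_eq {G : Finset Plane} {P : Set Plane} {v g : Plane}
    (h : v ∈ G) (hg : CornerGuard G P v g) (hgP : g ∈ P) : v = g := by
  obtain ⟨-, f, hf, hfv⟩ := hg
  by_contra hne
  exact absurd (hf v h hne) (not_lt.2 (hfv g hgP))

/-- Coordinates in the affine frame at `v` with axes through `u` and `w` are unique. -/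
theorem frame_coord_unique {v u w : Plane} (hi : cr v u w ≠ 0) {s t s' t' : ℝ}
    (h : v + s • (u - v) + t • (w - v) = v + s' • (u - v) + t' • (w - v)) : s = s' ∧ t = t' := by
  have h0 := congrArg (fun x : Plane => x 0) h
  have h1 := congrArg (fun x : Plane => x 1) h
  simp at h0 h1
  unfold cr at hi
  constructor
  · apply sub_eq_zero.1
    apply (mul_eq_zero.1 _).resolve_right hi
    linear_combination h0 * (w 1 - v 1) - h1 * (w 0 - v 0)
  · apply sub_eq_zero.1
    apply (mul_eq_zero.1 _).resolve_right hi
    linear_combination -h0 * (u 1 - v 1) + h1 * (u 0 - v 0)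

/-- Interior points have positive coordinates also in the frame `v; a, b`, where `a` and `b` are on
the two open edges at `v`. -/
theorem Corner.frame {G : Finset Plane} {P : Set Plane} {v u w a b : Plane}
    (h : Corner G P v u w) (ha : a ∈ openSegment ℝ v u) (hb : b ∈ openSegment ℝ v w) :
    cr v a b ≠ 0 ∧
    ∀ x ∈ interior P, ∃ s t : ℝ, 0 < s ∧ 0 < t ∧ x = v + s • (a - v) + t • (b - v) := by
  obtain ⟨r, hr, -, rfl⟩ := exists_param ha
  obtain ⟨q, hq, -, rfl⟩ := exists_param hb
  constructor
  · have : cr v (v + r • (u - v)) (v + q • (w - v)) = r * q * cr v u w := by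
      simp [cr]; ring
    rw [this]
    exact mul_ne_zero (by positivity) h.indep
  · intro x hx
    obtain ⟨s, t, hs, ht, rfl⟩ := h.coord x hx
    refine ⟨s / r, t / q, by positivity, by positivity, ?_⟩
    have e1 : s / r * r = s := div_mul_cancel₀ _ hr.ne'
    have e2 : t / q * q = t := div_mul_cancel₀ _ hq.ne'
    linear_combination (norm := module) (-e1) • (u - v) - e2 • (w - v)

theorem frame_distinct {v a b : Plane} (hi : cr v a b ≠ 0) {s t : ℝ} (hs : 0 < s) (ht : 0 < t) :
    a ≠ v + s • (a - v) + t • (b - v) ∧ b ≠ v + s • (a - v) + t • (b - v) ∧ a ≠ b := by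
  have ea : a = v + (1 : ℝ) • (a - v) + (0 : ℝ) • (b - v) := by module
  have eb : b = v + (0 : ℝ) • (a - v) + (1 : ℝ) • (b - v) := by module
  refine ⟨fun h => ?_, fun h => ?_, fun h => ?_⟩
  · exact ht.ne (frame_coord_unique hi (ea.symm.trans h)).2
  · exact hs.ne (frame_coord_unique hi (eb.symm.trans h)).1
  · exact one_ne_zero (frame_coord_unique hi (ea.symm.trans (h.trans eb))).1

/-- At most one guard is assigned to a vertex. -/
theorem Corner.unique {G : Finset Plane} {P : Set Plane} (hc : Convex ℝ P)
    (hno2 : ∀ x ∈ P, ∀ g ∈ G, ∀ g' ∈ G, Hidden G g x → Hidden G g' x → g = g')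
    {v u w : Plane} (h : Corner G P v u w) {g g' : Plane} (hgG : g ∈ G) (hg'G : g' ∈ G)
    (hg : g = v ∨ CornerGuard G P v g) (hg' : g' = v ∨ CornerGuard G P v g') : g = g' := by
  by_cases hvG : v ∈ G
  · have key : ∀ x, (x = v ∨ CornerGuard G P v x) → x = v := by
      rintro x (hx | hx)
      · exact hx
      · exact (cornerGuard_eq hvG hx (interior_subset hx.1)).symm
    rw [key g hg, key g' hg']
  replace hg := hg.resolve_left (fun e => hvG (e ▸ hgG))
  replace hg' := hg'.resolve_left (fun e => hvG (e ▸ hg'G))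
  obtain ⟨a, ha, hau⟩ := h.gu hvG
  obtain ⟨b, hb, hbw⟩ := h.gw hvG
  have haP := openSegment_subset_of hc h.hv h.hu hau
  have hbP := openSegment_subset_of hc h.hv h.hw hbw
  obtain ⟨hi, hco⟩ := h.frame hau hbw
  obtain ⟨s, t, hs, ht, e⟩ := hco g hg.1
  obtain ⟨s', t', hs', ht', e'⟩ := hco g' hg'.1
  obtain ⟨n1, n2, hab⟩ := frame_distinct hi hs ht
  obtain ⟨n1', n2', -⟩ := frame_distinct hi hs' ht'
  by_contra hne
  obtain ⟨p, q, hp, hq, hst, b1, b2, hmin⟩ := cornerGuard_coord hs ht e ha hb (e ▸ n1) (e ▸ n2)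
    haP hbP hg
  obtain ⟨p', q', hp', hq', hst', b1', b2', hmin'⟩ := cornerGuard_coord hs' ht' e' ha hb (e' ▸ n1')
    (e' ▸ n2') haP hbP hg'
  have k := hmin s' t' (e' ▸ hg'G) (e' ▸ Ne.symm hne)
  have k' := hmin' s t (e ▸ hgG) (e ▸ hne)
  subst e e'
  rcases lt_trichotomy s s' with hss | hss | hss
  · have htt : t' < t := by
      by_contra hcon
      nlinarith [mul_le_mul_of_nonneg_left (not_lt.1 hcon) hq'.le, mul_lt_mul_of_pos_left hss hp']
    refine cross_hidden hc hno2 h.hv haP hbP ha hb hab hs ht' hgG hg'G n1' n2 hst hst' ?_ ?_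
    · exact slope_ineq hq' (by linarith) b1' k' hss
    · exact slope_ineq (p := q) (q := p) hp (by linarith) (by linarith) (by linarith) htt
  · subst hss
    have k1 : q * t < q * t' := by linarith
    have k2 : q' * t' < q' * t := by linarith
    exact lt_asymm (lt_of_mul_lt_mul_left k1 hq.le) (lt_of_mul_lt_mul_left k2 hq'.le)
  · have htt : t < t' := by
      by_contra hcon
      nlinarith [mul_le_mul_of_nonneg_left (not_lt.1 hcon) hq.le, mul_lt_mul_of_pos_left hss hp]
    refine cross_hidden hc hno2 h.hv haP hbP ha hb hab hs' ht hg'G hgG n1 n2' hst' hst ?_ ?_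
    · exact slope_ineq hq (by linarith) b1 k hss
    · exact slope_ineq (p := q') (q := p') hp' (by linarith) (by linarith) (by linarith) htt

/-- The ordered form of `Corner.empty`: `a` is nearer to `v` than `a'`. -/
theorem Corner.empty_aux {G : Finset Plane} {P : Set Plane} (hc : Convex ℝ P)
    (hno2 : ∀ x ∈ P, ∀ g ∈ G, ∀ g' ∈ G, Hidden G g x → Hidden G g' x → g = g')
    {v u w : Plane} (h : Corner G P v u w) {r r' : ℝ} (hr : 0 < r) (hrr : r < r') (hr' : r' < 1)
    (ha : v + r • (u - v) ∈ G) (ha' : v + r' • (u - v) ∈ G) {g : Plane} (hgG : g ∈ G)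
    (hg : g = v ∨ CornerGuard G P v g) : False := by
  have hd : u - v ≠ 0 := by
    intro h0
    apply h.indep
    rw [sub_eq_zero.1 h0]; simp [cr]
  by_cases hvG : v ∈ G
  · exact line3 hno2 (v := v) (d := u - v) (r₁ := 0) (r := 1) hd hr hrr hr' (by simpa using hvG)
      ha ha' (by simpa using h.hu)
  replace hg := hg.resolve_left (fun e => hvG (e ▸ hgG))
  obtain ⟨b, hb, hbw⟩ := h.gw hvG
  have hau : v + r • (u - v) ∈ openSegment ℝ v u := by
    have := mem_openSegment_line (v := v) (d := u - v) hr (hrr.trans hr')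
    simpa using this
  set a := v + r • (u - v) with hadef
  have haP := openSegment_subset_of hc h.hv h.hu hau
  have hbP := openSegment_subset_of hc h.hv h.hw hbw
  obtain ⟨hi, hco⟩ := h.frame hau hbw
  obtain ⟨s, t, hs, ht, e⟩ := hco g hg.1
  obtain ⟨n1, n2, -⟩ := frame_distinct hi hs ht
  obtain ⟨p, q, hp, hq, hst, -, -, -⟩ := cornerGuard_coord hs ht e ha hb (e ▸ n1) (e ▸ n2)
    haP hbP hg
  have ht1 : 0 < 1 - t := by linarith
  -- The line from `b` through `g` meets the edge in the point with parameter `k` between `v`, `a`.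
  set k := s / (1 - t) with hk
  have hk0 : 0 < k := by positivity
  have hk1 : k < 1 := by rw [hk, div_lt_one ht1]; linarith
  have hX : v + k • (a - v) ∈ P := by
    have := triangle_mem hc h.hv haP hbP hk0.le le_rfl (by linarith : k + 0 ≤ 1)
    simpa using this
  have hXr : v + k • (a - v) = v + (k * r) • (u - v) := by
    rw [hadef]; module
  have hbX : Hidden G b (v + k • (a - v)) := by
    refine ⟨g, hgG, e ▸ n2.symm, ?_⟩
    apply mem_openSegment_of_prolong (l := 1 / (1 - t))
    · rw [lt_div_iff₀ ht1]; linarith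
    · have e1 : 1 / (1 - t) * s = k := by rw [hk]; ring
      have e2 : 1 / (1 - t) * (1 - t) = 1 := div_mul_cancel₀ _ ht1.ne'
      rw [e]
      linear_combination (norm := module) (-e1) • (a - v) + e2 • (b - v)
  have haX : Hidden G (v + r' • (u - v)) (v + k • (a - v)) := by
    refine ⟨a, ha, ?_, ?_⟩
    · intro h0
      exact hrr.ne (smul_left_injective ℝ hd (add_left_cancel h0))
    · rw [hXr, hadef, openSegment_symm]
      exact mem_openSegment_line (by nlinarith) hrr
  have hEq := hno2 _ hX _ ha' _ hb haX hbX
  obtain ⟨y, hy, -, rfl⟩ := exists_param hbw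
  have : v + r' • (u - v) + (0 : ℝ) • (w - v) = v + (0 : ℝ) • (u - v) + y • (w - v) := by
    rw [zero_smul, zero_smul, add_zero, add_zero, hEq]
  exact hy.ne (frame_coord_unique h.indep this).2

/-- If an open edge carries two guards, no guard is assigned to its end `v`. -/
theorem Corner.empty {G : Finset Plane} {P : Set Plane} (hc : Convex ℝ P)
    (hno2 : ∀ x ∈ P, ∀ g ∈ G, ∀ g' ∈ G, Hidden G g x → Hidden G g' x → g = g')
    {v u w : Plane} (h : Corner G P v u w) {a a' : Plane} (ha : a ∈ G) (ha' : a' ∈ G)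
    (hau : a ∈ openSegment ℝ v u) (hau' : a' ∈ openSegment ℝ v u) (hne : a ≠ a')
    {g : Plane} (hgG : g ∈ G) (hg : g = v ∨ CornerGuard G P v g) : False := by
  obtain ⟨r, h0, h1, rfl⟩ := exists_param hau
  obtain ⟨r', h0', h1', rfl⟩ := exists_param hau'
  rcases lt_trichotomy r r' with hlt | rfl | hlt
  · exact h.empty_aux hc hno2 h0 hlt h1' ha ha' hgG hg
  · exact hne rfl
  · exact h.empty_aux hc hno2 h0' hlt h1 ha' ha hgG hg

/-! ### Guards on an edge -/

theorem edge_card_le {G : Finset Plane} {P : Set Plane}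
    (hno2 : ∀ x ∈ P, ∀ g ∈ G, ∀ g' ∈ G, Hidden G g x → Hidden G g' x → g = g')
    {v w : Plane} (hvw : w ≠ v) (hw : w ∈ P) (T : Finset Plane) (hT : T ⊆ G)
    (hTo : ∀ a ∈ T, a ∈ openSegment ℝ v w) : T.card ≤ 2 := by
  by_contra hcon
  obtain ⟨a, ha, b, hb, c, hcT, hab, hac, hbc⟩ := Finset.two_lt_card.1 (not_le.1 hcon)
  obtain ⟨p, -, hp, rfl⟩ := exists_param (hTo _ ha)
  obtain ⟨q, -, hq, rfl⟩ := exists_param (hTo _ hb)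
  obtain ⟨r, -, hr, rfl⟩ := exists_param (hTo _ hcT)
  have hd : w - v ≠ 0 := sub_ne_zero.2 hvw
  have h1 : v + (1 : ℝ) • (w - v) ∈ P := by simpa using hw
  replace ha := hT ha
  replace hb := hT hb
  replace hcT := hT hcT
  have hpq : p ≠ q := by rintro rfl; exact hab rfl
  have hpr : p ≠ r := by rintro rfl; exact hac rfl
  have hqr : q ≠ r := by rintro rfl; exact hbc rfl
  rcases lt_or_gt_of_ne hpq with h | h <;> rcases lt_or_gt_of_ne hpr with h' | h' <;>
    rcases lt_or_gt_of_ne hqr with h'' | h''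
  · exact line3 hno2 hd h h'' hr ha hb hcT h1
  · exact line3 hno2 hd h' h'' hq ha hcT hb h1
  · linarith
  · exact line3 hno2 hd h' h hq hcT ha hb h1
  · exact line3 hno2 hd h h' hr hb ha hcT h1
  · linarith
  · exact line3 hno2 hd h'' h' hp hb hcT ha h1
  · exact line3 hno2 hd h'' h hp hcT hb ha h1

/-! ### Exposing functionals and the edges of the polygon -/

/-- A point of the hull of a finite set that is extreme there is strictly exposed by a linear
functional. -/
theorem exists_exposing {S : Finset Plane} {g : Plane}
    (hg : g ∈ Set.extremePoints ℝ (convexHull ℝ (S : Set Plane))) :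
    ∃ f : Plane →L[ℝ] ℝ, ∀ x ∈ S, x ≠ g → f x < f g := by
  have hg' := (convex_convexHull ℝ (S : Set Plane)).mem_extremePoints_iff_mem_sdiff_convexHull_sdiff.1
    hg
  have hn : g ∉ convexHull ℝ ((S : Set Plane) \ {g}) := by
    intro h
    exact hg'.2 (convexHull_mono (Set.sdiff_subset_sdiff_left (subset_convexHull ℝ _)) h)
  have hcl : IsClosed (convexHull ℝ ((S : Set Plane) \ {g})) :=
    (S.finite_toSet.subset Set.sdiff_subset).isClosed_convexHull ℝ
  obtain ⟨f, c, hf, hfc⟩ := geometric_hahn_banach_closed_point (convex_convexHull ℝ _) hcl hn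
  exact ⟨f, fun x hx hne => (hf x (subset_convexHull ℝ _ ⟨hx, hne⟩)).trans hfc⟩

theorem functional_coord (f : Plane →L[ℝ] ℝ) : ∃ p q : ℝ, ∀ x : Plane, f x = p * x 0 + q * x 1 := by
  refine ⟨f (EuclideanSpace.single 0 1), f (EuclideanSpace.single 1 1), fun x => ?_⟩
  have : x = x 0 • EuclideanSpace.single 0 (1 : ℝ) + x 1 • EuclideanSpace.single 1 (1 : ℝ) := by
    apply plane_ext <;> simp
  conv_lhs => rw [this]
  simp only [map_add, map_smul, smul_eq_mul]
  ring

/-- The successor of `v` is the vertex of least slope as seen from `v`, slopes being measured in a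
frame whose first coordinate is a functional exposing `v`. -/
theorem exists_next_s11 {n : ℕ} {V : Finset Plane} {P : Set Plane} (hP : IsConvexPolygon n V P)
    {v : Plane} (hv : v ∈ V) : ∃ w, IsNext V v w := by
  obtain ⟨hn, hcard, rfl, hext⟩ := hP
  obtain ⟨f, hf⟩ := exists_exposing (hext v hv)
  obtain ⟨p, q, hpq⟩ := functional_coord f
  set F : Plane → ℝ := fun x => p * (v 0 - x 0) + q * (v 1 - x 1) with hF
  set H : Plane → ℝ := fun x => -q * (v 0 - x 0) + p * (v 1 - x 1) with hH
  have hFpos : ∀ x ∈ V, x ≠ v → 0 < F x := by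
    intro x hx hne
    have := hf x hx hne
    rw [hpq, hpq] at this
    simp only [hF]; linarith
  have hne : (V.erase v).Nonempty := by
    rw [← Finset.card_pos, Finset.card_erase_of_mem hv]; omega
  obtain ⟨w, hw, hmin⟩ := Finset.exists_min_image (V.erase v) (fun x => H x / F x) hne
  obtain ⟨hwv, hwV⟩ := Finset.mem_erase.1 hw
  refine ⟨w, hwV, hwv, fun x hx hxv hxw => ?_⟩
  have hFw := hFpos w hwV hwv
  have hFx := hFpos x hx hxv
  have hle := hmin x (Finset.mem_erase.2 ⟨hxv, hx⟩)
  rw [div_le_div_iff₀ hFw hFx] at hle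
  have hid : F w * H x - H w * F x = (p ^ 2 + q ^ 2) * cr v w x := by
    simp only [hF, hH, cr]; ring
  have hpq0 : 0 < p ^ 2 + q ^ 2 := by
    rcases eq_or_ne p 0 with rfl | hp
    · rcases eq_or_ne q 0 with rfl | hq
      · simp [hF] at hFw
      · positivity
    · positivity
  have h0 : 0 ≤ cr v w x := by
    by_contra hcon
    nlinarith [mul_neg_of_pos_of_neg hpq0 (not_le.1 hcon)]
  refine lt_of_le_of_ne h0 fun hz => ?_
  -- If `v, w, x` are collinear, then one of `w, x` lies between `v` and the other.
  have key : ∀ y z : Plane, y ∈ V → z ∈ V → y ≠ v → z ≠ v → cr v y z = 0 → F y < F z → False := by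
    intro y z hy hz hyv hzv hcr hlt
    have hFy := hFpos y hy hyv
    have hyz : y ∈ openSegment ℝ v z := by
      apply mem_openSegment_of_prolong (l := F z / F y)
      · rwa [lt_div_iff₀ hFy, one_mul]
      · have e : F z / F y * F y = F z := div_mul_cancel₀ _ hFy.ne'
        have c1 : F y * (z 0 - v 0) = F z * (y 0 - v 0) := by
          simp only [hF]; unfold cr at hcr; linear_combination q * hcr
        have c2 : F y * (z 1 - v 1) = F z * (y 1 - v 1) := by
          simp only [hF]; unfold cr at hcr; linear_combination (-p) * hcr
        apply plane_ext
        · apply mul_left_cancel₀ hFy.ne'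
          simp only [PiLp.add_apply, PiLp.smul_apply, PiLp.sub_apply, smul_eq_mul]
          linear_combination c1 - (y 0 - v 0) * e
        · apply mul_left_cancel₀ hFy.ne'
          simp only [PiLp.add_apply, PiLp.smul_apply, PiLp.sub_apply, smul_eq_mul]
          linear_combination c2 - (y 1 - v 1) * e
    have := (hext y hy).2 (subset_convexHull ℝ _ hv) (subset_convexHull ℝ _ hz) hyz
    exact hyv this.symm
  have hzs : cr v x w = 0 := by unfold cr at *; linarith
  rcases lt_trichotomy (F w) (F x) with h | h | h
  · exact key w x hwV hx hwv hxv hz.symm h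
  · apply hxw
    have hHe : H x = H w := by
      rw [← hz, mul_zero, h] at hid
      have : F x * (H x - H w) = 0 := by linarith
      linarith [(mul_eq_zero.1 this).resolve_left hFx.ne']
    simp only [hF, hH] at h hHe
    apply plane_ext
    · apply mul_left_cancel₀ hpq0.ne'
      linear_combination p * h + q * hHe
    · apply mul_left_cancel₀ hpq0.ne'
      linear_combination q * h - p * hHe
  · exact key x w hx hwV hxv hwv hzs h

/-- Two vertices with the same successor would each lie strictly to the left of the other's edge,
which gives `cr v w v'` both signs. -/
theorem next_inj {V : Finset Plane} {v v' w : Plane} (hv : v ∈ V) (hv' : v' ∈ V)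
    (h : IsNext V v w) (h' : IsNext V v' w) : v = v' := by
  by_contra hne
  have h1 := h.2.2 v' hv' (Ne.symm hne) h'.2.1.symm
  have h2 := h'.2.2 v hv hne h.2.1.symm
  unfold cr at h1 h2
  linarith

theorem cr_combo (a b x y : Plane) {s t : ℝ} (h : s + t = 1) :
    cr a b (s • x + t • y) = s * cr a b x + t * cr a b y := by
  obtain rfl : s = 1 - t := by linarith
  simp [cr]; ring

theorem next_nonneg {V : Finset Plane} {v w : Plane} (h : IsNext V v w) :
    ∀ x ∈ convexHull ℝ (V : Set Plane), 0 ≤ cr v w x := by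
  have hconv : Convex ℝ {x | 0 ≤ cr v w x} := by
    intro x hx y hy s t hs ht hst
    simp only [mem_ofPred_eq] at *
    rw [cr_combo _ _ _ _ hst]
    positivity
  intro x hx
  refine convexHull_min ?_ hconv hx
  intro y hy
  by_cases h1 : y = v
  · subst h1; simp [cr]
  by_cases h2 : y = w
  · subst h2; simp only [mem_ofPred_eq, cr]; linarith
  · exact (h.2.2 y hy h1 h2).le

theorem cr_pos_of_interior {P : Set Plane} {v w : Plane} (hvw : w ≠ v)
    (h : ∀ x ∈ P, 0 ≤ cr v w x) {x : Plane} (hx : x ∈ interior P) : 0 < cr v w x := by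
  refine lt_of_le_of_ne (h x (interior_subset hx)) fun h0 => ?_
  -- Move `x` slightly in the direction of the outer normal of the line `v w`.
  set d : Plane := !₂[w 1 - v 1, -(w 0 - v 0)] with hd
  have hcont : Continuous fun e : ℝ => x + e • d := by fun_prop
  have hnear : ∀ᶠ e : ℝ in nhds 0, x + e • d ∈ P := by
    apply hcont.continuousAt.eventually_mem
    simpa using mem_interior_iff_mem_nhds.1 hx
  have hpos0 : ∀ᶠ e : ℝ in nhdsWithin 0 (Ioi 0), 0 < e := self_mem_nhdsWithin
  obtain ⟨e, heP, he⟩ := ((hnear.filter_mono nhdsWithin_le_nhds).and hpos0).exists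
  have hc := h _ heP
  have hval : cr v w (x + e • d) = cr v w x - e * ((w 0 - v 0) ^ 2 + (w 1 - v 1) ^ 2) := by
    simp [cr, hd]; ring
  have hpos : 0 < (w 0 - v 0) ^ 2 + (w 1 - v 1) ^ 2 := by
    by_contra hcon
    apply hvw
    apply plane_ext <;> nlinarith [sq_nonneg (w 0 - v 0), sq_nonneg (w 1 - v 1)]
  have : 0 < e * ((w 0 - v 0) ^ 2 + (w 1 - v 1) ^ 2) := mul_pos he hpos
  linarith

theorem next_next_pos {V : Finset Plane} (hV : 3 ≤ V.card) {u v w : Plane} (hu : u ∈ V)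
    (h : IsNext V u v) (h' : IsNext V v w) : 0 < cr v w u := by
  refine h'.2.2 u hu h.2.1.symm ?_
  rintro rfl
  obtain ⟨x, hx, hxn⟩ : ∃ x ∈ V, x ∉ ({u, v} : Finset Plane) := by
    by_contra! hcon
    have := (Finset.card_le_card hcon).trans Finset.card_le_two
    omega
  simp only [Finset.mem_insert, Finset.mem_singleton, not_or] at hxn
  have h1 := h.2.2 x hx hxn.1 hxn.2
  have h2 := h'.2.2 x hx hxn.2 hxn.1
  unfold cr at h1 h2
  linarith

/-- Coordinates in the frame at `v` with axes along the two edges at `v`, as ratios of areas. -/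
theorem corner_coord {u v w : Plane} (hpos : 0 < cr v w u) (x : Plane) :
    x = v + (cr v w x / cr v w u) • (u - v) + (cr u v x / cr v w u) • (w - v) := by
  apply plane_ext
  · apply mul_left_cancel₀ hpos.ne'
    simp only [PiLp.add_apply, PiLp.smul_apply, PiLp.sub_apply, smul_eq_mul]
    field_simp
    unfold cr; ring
  · apply mul_left_cancel₀ hpos.ne'
    simp only [PiLp.add_apply, PiLp.smul_apply, PiLp.sub_apply, smul_eq_mul]
    field_simp
    unfold cr; ring

/-- The intersection of the edge half-planes is contained in the polygon: a separating functional
would be maximal over the polygon at a vertex, hence also over the cone at that vertex. -/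
theorem mem_of_cr_nonneg {V : Finset Plane} (hV : 3 ≤ V.card) {N M : Plane → Plane}
    (hN : ∀ v ∈ V, IsNext V v (N v)) (hM : ∀ v ∈ V, M v ∈ V ∧ N (M v) = v) {x : Plane}
    (hx : ∀ v ∈ V, 0 ≤ cr v (N v) x) : x ∈ convexHull ℝ (V : Set Plane) := by
  by_contra hcon
  obtain ⟨f, c, hf, hfc⟩ := geometric_hahn_banach_closed_point (convex_convexHull ℝ _)
    (V.finite_toSet.isClosed_convexHull ℝ) hcon
  obtain ⟨v, hv, hmax⟩ := Finset.exists_max_image V f (Finset.card_pos.1 (by omega))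
  obtain ⟨hu, hNu⟩ := hM v hv
  have hpos : 0 < cr v (N v) (M v) :=
    next_next_pos hV hu (by simpa [hNu] using hN _ hu) (hN v hv)
  have e := congrArg f (corner_coord hpos x)
  simp only [map_add, map_smul, map_sub, smul_eq_mul] at e
  have h1 : 0 ≤ cr v (N v) x / cr v (N v) (M v) := div_nonneg (hx v hv) hpos.le
  have h2 : 0 ≤ cr (M v) v x / cr v (N v) (M v) := by
    have := hx _ hu
    rw [hNu] at this
    exact div_nonneg this hpos.le
  have h3 := hmax _ hu
  have h4 := hmax _ (hN v hv).1
  have h5 := hf v (subset_convexHull ℝ _ hv)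
  nlinarith [mul_nonneg h1 (sub_nonneg.2 h3), mul_nonneg h2 (sub_nonneg.2 h4)]

theorem frontier_cases {V : Finset Plane} (hV : 3 ≤ V.card) {N M : Plane → Plane}
    (hN : ∀ v ∈ V, IsNext V v (N v)) (hM : ∀ v ∈ V, M v ∈ V ∧ N (M v) = v) {x : Plane}
    (hx : x ∈ frontier (convexHull ℝ (V : Set Plane))) :
    x ∈ V ∨ ∃ v ∈ V, x ∈ openSegment ℝ v (N v) := by
  have hcl : IsClosed (convexHull ℝ (V : Set Plane)) :=
    V.finite_toSet.isClosed_convexHull ℝ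
  have hxP : x ∈ convexHull ℝ (V : Set Plane) := hcl.frontier_subset hx
  obtain ⟨v, hv, h0⟩ : ∃ v ∈ V, cr v (N v) x ≤ 0 := by
    by_contra! hcon
    apply hx.2
    have hopen : IsOpen (⋂ v ∈ V, {y : Plane | 0 < cr v (N v) y}) := by
      apply isOpen_biInter_finset
      intro v _
      apply isOpen_lt continuous_const
      unfold cr
      fun_prop
    refine interior_maximal ?_ hopen (mem_iInter₂.2 hcon)
    intro y hy
    exact mem_of_cr_nonneg hV hN hM fun v hv => (mem_iInter₂.1 hy v hv).le
  have hz : cr v (N v) x = 0 := le_antisymm h0 (next_nonneg (hN v hv) x hxP)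
  obtain ⟨hu, hNu⟩ := hM v hv
  have hnu : IsNext V (M v) v := by simpa [hNu] using hN _ hu
  have hpos : 0 < cr v (N v) (M v) := next_next_pos hV hu hnu (hN v hv)
  have e := corner_coord hpos x
  have ht : 0 ≤ cr (M v) v x / cr v (N v) (M v) := div_nonneg (next_nonneg hnu x hxP) hpos.le
  set t := cr (M v) v x / cr v (N v) (M v)
  rw [hz, zero_div, zero_smul, add_zero] at e
  have hw := (hN v hv).1
  have hpos' : 0 < cr (N v) (N (N v)) v := next_next_pos hV hv (hN v hv) (hN _ hw)
  have h1 := next_nonneg (hN _ hw) x hxP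
  have hval : cr (N v) (N (N v)) x = (1 - t) * cr (N v) (N (N v)) v := by
    rw [e]; simp [cr]; ring
  rw [hval] at h1
  have ht1 : t ≤ 1 := by linarith [nonneg_of_mul_nonneg_left h1 hpos']
  rcases ht.eq_or_lt with h | h
  · left; rw [e, ← h]; simpa using hv
  rcases ht1.eq_or_lt with h' | h'
  · left; rw [e, h']; simpa using hw
  · right
    refine ⟨v, hv, ?_⟩
    have := mem_openSegment_line (v := v) (d := N v - v) h h'
    rw [← e] at this
    simpa using this

theorem segment_subset_frontier {V : Finset Plane} {v w : Plane} (hv : v ∈ V)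
    (h : IsNext V v w) : segment ℝ v w ⊆ frontier (convexHull ℝ (V : Set Plane)) := by
  intro x hx
  have hxP := (convex_convexHull ℝ (V : Set Plane)).segment_subset (subset_convexHull ℝ _ hv)
    (subset_convexHull ℝ _ h.1) hx
  refine ⟨subset_closure hxP, fun hi => ?_⟩
  have hpos := cr_pos_of_interior h.2.1 (next_nonneg h) hi
  obtain ⟨s, t, -, -, hst, rfl⟩ := hx
  rw [cr_combo _ _ _ _ hst] at hpos
  have h1 : cr v w v = 0 := by simp [cr]
  have h2 : cr v w w = 0 := by unfold cr; ring
  rw [h1, h2] at hpos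
  simp at hpos

/-! ### Counting -/

/-- Under the Shrunken Polygon condition and with no point of P hidden
from two distinct guards, the set G* (guards on the boundary of P, together with
guards interior to P that are extreme points of the hull of the guards) has at most
2n elements. -/
theorem statement11 (n : ℕ) (V : Finset Plane) (P : Set Plane)
    (hP : IsConvexPolygon n V P) (G : Finset Plane) (hG : ↑G ⊆ P)
    (hno2 : ∀ x ∈ P, ∀ g ∈ G, ∀ g' ∈ G, Hidden G g x → Hidden G g' x → g = g')
    (hshrunk : ∀ u ∈ V, ∀ v ∈ V, u ≠ v → segment ℝ u v ⊆ frontier P →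
      (∃ g ∈ G, g ∈ openSegment ℝ u v) ∨ (u ∈ G ∧ v ∈ G)) :
    (((↑G : Set Plane) ∩ frontier P) ∪
      {g ∈ (↑G : Set Plane) | g ∈ interior P ∧
        g ∈ Set.extremePoints ℝ (convexHull ℝ (↑G : Set Plane))}).ncard ≤ 2 * n := by
  classical
  have hex : ∀ v, ∃ w, v ∈ V → IsNext V v w := by
    intro v
    by_cases hv : v ∈ V
    · obtain ⟨w, hw⟩ := exists_next_s11 hP hv
      exact ⟨w, fun _ => hw⟩
    · exact ⟨v, fun h => absurd h hv⟩
  choose N hN using hex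
  obtain ⟨hn, hcard, rfl, -⟩ := hP
  have hV : 3 ≤ V.card := by omega
  have hmaps : ∀ v ∈ V, N v ∈ V := fun v hv => (hN v hv).1
  -- As an injective self-map of `V`, `N` is a permutation; `M` below is its inverse.
  have hinj : Set.InjOn N V := by
    intro v hv v' hv' h
    exact next_inj hv hv' (hN v hv) (h ▸ hN v' hv')
  have himg : V.image N = V := by
    apply Finset.eq_of_subset_of_card_le
    · intro x hx
      obtain ⟨v, hv, rfl⟩ := Finset.mem_image.1 hx
      exact hmaps v hv
    · rw [Finset.card_image_of_injOn hinj]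
  have hex' : ∀ v, ∃ u, v ∈ V → u ∈ V ∧ N u = v := by
    intro v
    by_cases hv : v ∈ V
    · rw [← himg] at hv
      obtain ⟨u, hu, e⟩ := Finset.mem_image.1 hv
      exact ⟨u, fun _ => ⟨hu, e⟩⟩
    · exact ⟨v, fun h => absurd h hv⟩
  choose M hM using hex'
  set P := convexHull ℝ (V : Set Plane) with hPdef
  have hc : Convex ℝ P := convex_convexHull ℝ _
  have hVP : ∀ v ∈ V, v ∈ P := fun v hv => subset_convexHull ℝ _ hv
  have hedge : ∀ v ∈ V, (∃ g ∈ G, g ∈ openSegment ℝ v (N v)) ∨ (v ∈ G ∧ N v ∈ G) := fun v hv =>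
    hshrunk v hv (N v) (hmaps v hv) (hN v hv).2.1.symm (segment_subset_frontier hv (hN v hv))
  have hcorner' : ∀ u ∈ V, Corner G P (N u) u (N (N u)) := by
    intro u hu
    have hv := hmaps u hu
    have hpos : 0 < cr (N u) (N (N u)) u := next_next_pos hV hu (hN u hu) (hN _ hv)
    refine ⟨hVP _ hv, hVP _ hu, hVP _ (hmaps _ hv), ?_, ?_, ?_, ?_⟩
    · unfold cr at *; intro h0; linarith
    · intro x hx
      refine ⟨_, _, ?_, ?_, corner_coord hpos x⟩
      · exact div_pos (cr_pos_of_interior (hN _ hv).2.1 (next_nonneg (hN _ hv)) hx) hpos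
      · exact div_pos (cr_pos_of_interior (hN _ hu).2.1 (next_nonneg (hN _ hu)) hx) hpos
    · intro hvG
      obtain ⟨g, hg, hgo⟩ := (hedge u hu).resolve_right fun h => hvG h.2
      exact ⟨g, hg, openSegment_symm ℝ u (N u) ▸ hgo⟩
    · intro hvG
      exact (hedge _ hv).resolve_right fun h => hvG h.1
  have hcorner : ∀ v ∈ V, Corner G P v (N v) (M v) := by
    intro v hv
    obtain ⟨hu, e⟩ := hM v hv
    have := (hcorner' _ hu).symm
    rwa [e] at this
  -- The guards on the open edge from `v`, and the guards assigned to the vertex `v`.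
  let E : Plane → Finset Plane := fun v => G.filter (· ∈ openSegment ℝ v (N v))
  let C : Plane → Finset Plane := fun v => G.filter fun g => g = v ∨ CornerGuard G P v g
  have hC1 : ∀ v ∈ V, (C v).card ≤ 1 := by
    intro v hv
    refine Finset.card_le_one.2 fun g hg g' hg' => ?_
    have h1 := Finset.mem_filter.1 hg
    have h2 := Finset.mem_filter.1 hg'
    exact (hcorner v hv).unique hc hno2 h1.1 h2.1 h1.2 h2.2
  have hE : ∀ v ∈ V, (E v).card ≤ 2 := fun v hv =>
    edge_card_le hno2 (hN v hv).2.1 (hVP _ (hmaps v hv)) _ (Finset.filter_subset _ _)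
      fun a ha => (Finset.mem_filter.1 ha).2
  have hEC : ∀ v ∈ V, 2 * (E v).card + (C v).card + (C (N v)).card ≤ 4 := by
    intro v hv
    have k1 := hC1 v hv
    have k2 := hC1 _ (hmaps v hv)
    by_cases h : (E v).card ≤ 1
    · omega
    obtain ⟨a, ha, a', ha', hne⟩ := Finset.one_lt_card.1 (not_le.1 h)
    obtain ⟨ha, hao⟩ := Finset.mem_filter.1 ha
    obtain ⟨ha', hao'⟩ := Finset.mem_filter.1 ha'
    have z1 : C v = ∅ := by
      refine Finset.filter_eq_empty_iff.2 fun {g} hg hgv => ?_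
      exact (hcorner v hv).empty hc hno2 ha ha' hao hao' hne hg hgv
    have z2 : C (N v) = ∅ := by
      refine Finset.filter_eq_empty_iff.2 fun {g} hg hgv => ?_
      rw [openSegment_symm] at hao hao'
      exact (hcorner' v hv).empty hc hno2 ha ha' hao hao' hne hg hgv
    rw [z1, z2]
    have := hE v hv
    simp; omega
  have hsub : (((↑G : Set Plane) ∩ frontier P) ∪ {g ∈ (↑G : Set Plane) | g ∈ interior P ∧
      g ∈ Set.extremePoints ℝ (convexHull ℝ (↑G : Set Plane))}) ⊆
      ((V.biUnion fun v => E v ∪ C v : Finset Plane) : Set Plane) := by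
    intro g hg
    simp only [Finset.coe_biUnion, mem_iUnion, Finset.mem_coe, Finset.coe_union, mem_union]
    rcases hg with ⟨hgG, hgf⟩ | ⟨hgG, hgi, hge⟩
    · rcases frontier_cases hV hN hM hgf with h | ⟨v, hv, h⟩
      · exact ⟨g, h, Or.inr (Finset.mem_filter.2 ⟨hgG, Or.inl rfl⟩)⟩
      · exact ⟨v, hv, Or.inl (Finset.mem_filter.2 ⟨hgG, h⟩)⟩
    · obtain ⟨f, hf⟩ := exists_exposing hge
      obtain ⟨v, hv, hmax⟩ := Finset.exists_max_image V f (Finset.card_pos.1 (by omega))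
      refine ⟨v, hv, Or.inr (Finset.mem_filter.2 ⟨hgG, Or.inr ⟨hgi, f, hf, ?_⟩⟩)⟩
      intro x hx
      exact convexHull_min (t := {x | f x ≤ f v}) hmax
        (convex_halfSpace_le f.toLinearMap.isLinear _) hx
  have hle := Set.ncard_le_ncard hsub (Finset.finite_toSet _)
  rw [Set.ncard_coe_finset] at hle
  have hbi : (V.biUnion fun v => E v ∪ C v).card ≤ ∑ v ∈ V, ((E v).card + (C v).card) :=
    Finset.card_biUnion_le.trans (Finset.sum_le_sum fun v _ => Finset.card_union_le _ _)
  have hsum : ∑ v ∈ V, (2 * (E v).card + (C v).card + (C (N v)).card) ≤ ∑ v ∈ V, 4 :=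
    Finset.sum_le_sum hEC
  have hperm : ∑ v ∈ V, (C (N v)).card = ∑ v ∈ V, (C v).card := by
    conv_rhs => rw [← himg, Finset.sum_image hinj]
  simp only [Finset.sum_add_distrib, ← Finset.mul_sum, hperm, Finset.sum_const, smul_eq_mul,
    hcard] at hsum hbi
  omega
end
end
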